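/- arXiv:1009.4092 — 5 statements merged into one kernel-verified Lean document; each statement's English description precedes it below -/
import Mathlib

section
/- Let n > 0, α ≥ 0, and let u be a strictly positive classical solution of the thin-film equation ∂_t u + ∂_θ( uⁿ ( ∂_θ³ u + α² ∂_θ u − sin θ ) ) = 0 on (0, ∞) × ℝ, 2π-periodic in θ. Then for every t > 0, the energy E(u(t, ·)) = (1/2)∫_{-π}^{π} ((∂_θ u)² − α² u²)(t,θ) dθ − ∫_{-π}^{π} u(t,θ) cos θ dθ is differentiable in t and satisfies the dissipation identity d/dt E(u(t, ·)) = − ∫_{-π}^{π} u(t,θ)ⁿ ( ∂_θ³ u + α² ∂_θ u − sin θ )²(t,θ) dθ ≤ 0. -/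
open MeasureTheory Real Set Filter

/-- The thin-film energy `E(v) = (1/2)∫_{-π}^{π} (v'² − α²v²) dθ − ∫_{-π}^{π} v cos θ dθ`. -/
noncomputable def energy (α : ℝ) (u : ℝ → ℝ) : ℝ :=
  (1/2) * (∫ θ in (-π)..π, ((deriv u θ)^2 - α^2 * (u θ)^2)) -
    ∫ θ in (-π)..π, u θ * Real.cos θ

/-- A strictly positive classical solution of the thin-film equation
`∂ₜu + ∂_θ(uⁿ(∂_θ³u + α²∂_θu − sin θ)) = 0` on `(0,∞) × ℝ`: a smooth function on
`[0,∞) × ℝ`, `2π`-periodic and strictly positive, satisfying the equation for `t > 0`. -/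
def IsThinFilmSolution (n α : ℝ) (u : ℝ → ℝ → ℝ) : Prop :=
  ContDiffOn ℝ (⊤ : ℕ∞) (fun p : ℝ × ℝ => u p.1 p.2) (Ici (0:ℝ) ×ˢ (univ : Set ℝ)) ∧
  (∀ t θ : ℝ, 0 ≤ t → 0 < u t θ) ∧
  (∀ t : ℝ, Function.Periodic (u t) (2*π)) ∧
  (∀ t θ : ℝ, 0 < t →
    deriv (fun s => u s θ) t +
      deriv (fun x => u t x ^ n *
        (deriv (deriv (deriv (u t))) x + α^2 * deriv (u t) x - Real.sin x)) θ = 0)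

open scoped ContDiff Topology

section SmoothOnStrip

variable {f : ℝ → ℝ → ℝ} {I : Set ℝ}

theorem hasDerivAt_fst_of_contDiffOn (hI : IsOpen I)
    (hf : ContDiffOn ℝ ∞ (fun p : ℝ × ℝ => f p.1 p.2) (I ×ˢ univ)) {t : ℝ} (ht : t ∈ I) (x : ℝ) :
    HasDerivAt (fun s => f s x) (fderiv ℝ (fun p : ℝ × ℝ => f p.1 p.2) (t, x) (1, 0)) t := by
  have hd : DifferentiableAt ℝ (fun p : ℝ × ℝ => f p.1 p.2) (t, x) :=
    (hf.contDiffAt ((hI.prod isOpen_univ).mem_nhds ⟨ht, mem_univ _⟩)).differentiableAt (by simp)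
  exact hd.hasFDerivAt.comp_hasDerivAt (f := fun s : ℝ => (s, x)) t
    ((hasDerivAt_id t).prodMk (hasDerivAt_const t x))

theorem hasDerivAt_snd_of_contDiffOn (hI : IsOpen I)
    (hf : ContDiffOn ℝ ∞ (fun p : ℝ × ℝ => f p.1 p.2) (I ×ˢ univ)) {t : ℝ} (ht : t ∈ I) (x : ℝ) :
    HasDerivAt (f t) (fderiv ℝ (fun p : ℝ × ℝ => f p.1 p.2) (t, x) (0, 1)) x := by
  have hd : DifferentiableAt ℝ (fun p : ℝ × ℝ => f p.1 p.2) (t, x) :=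
    (hf.contDiffAt ((hI.prod isOpen_univ).mem_nhds ⟨ht, mem_univ _⟩)).differentiableAt (by simp)
  exact hd.hasFDerivAt.comp_hasDerivAt (f := fun y : ℝ => (t, y)) x
    ((hasDerivAt_const x t).prodMk (hasDerivAt_id x))

theorem contDiffOn_deriv_fst (hI : IsOpen I)
    (hf : ContDiffOn ℝ ∞ (fun p : ℝ × ℝ => f p.1 p.2) (I ×ˢ univ)) :
    ContDiffOn ℝ ∞ (fun p : ℝ × ℝ => deriv (fun s => f s p.2) p.1) (I ×ˢ univ) :=
  (((contDiffOn_infty_iff_fderiv_of_isOpen (hI.prod isOpen_univ)).1 hf).2.clm_apply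
    (contDiffOn_const (c := ((1 : ℝ), (0 : ℝ))))).congr
    fun p hp => (hasDerivAt_fst_of_contDiffOn hI hf hp.1 p.2).deriv

theorem contDiffOn_deriv_snd (hI : IsOpen I)
    (hf : ContDiffOn ℝ ∞ (fun p : ℝ × ℝ => f p.1 p.2) (I ×ˢ univ)) :
    ContDiffOn ℝ ∞ (fun p : ℝ × ℝ => deriv (f p.1) p.2) (I ×ˢ univ) :=
  (((contDiffOn_infty_iff_fderiv_of_isOpen (hI.prod isOpen_univ)).1 hf).2.clm_apply
    (contDiffOn_const (c := ((0 : ℝ), (1 : ℝ))))).congr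
    fun p hp => (hasDerivAt_snd_of_contDiffOn hI hf hp.1 p.2).deriv

theorem contDiff_snd_of_contDiffOn
    (hf : ContDiffOn ℝ ∞ (fun p : ℝ × ℝ => f p.1 p.2) (I ×ˢ univ)) {t : ℝ} (ht : t ∈ I) :
    ContDiff ℝ ∞ (f t) :=
  hf.comp_contDiff (contDiff_prodMk_right t) fun _ => ⟨ht, mem_univ _⟩

/-- Symmetry of the mixed second partial derivatives. -/
theorem deriv_deriv_comm (hI : IsOpen I)
    (hf : ContDiffOn ℝ ∞ (fun p : ℝ × ℝ => f p.1 p.2) (I ×ˢ univ)) {t : ℝ} (ht : t ∈ I) (x : ℝ) :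
    deriv (fun s => deriv (f s) x) t = deriv (fun y => deriv (fun s => f s y) t) x := by
  set F : ℝ × ℝ → ℝ := fun p => f p.1 p.2
  have hmem : I ×ˢ univ ∈ 𝓝 (t, x) := (hI.prod isOpen_univ).mem_nhds ⟨ht, mem_univ _⟩
  have hd : DifferentiableAt ℝ (fderiv ℝ F) (t, x) :=
    (((contDiffOn_infty_iff_fderiv_of_isOpen (hI.prod isOpen_univ)).1 hf).2.contDiffAt
      hmem).differentiableAt (by simp)
  have hsymm : IsSymmSndFDerivAt ℝ F (t, x) := (hf.contDiffAt hmem).isSymmSndFDerivAt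
    (by simpa using WithTop.coe_le_coe.2 (le_top (a := (2 : ℕ∞))))
  have h₁ : HasDerivAt (fun s => fderiv ℝ F (s, x) (0, 1))
      (fderiv ℝ (fderiv ℝ F) (t, x) (1, 0) (0, 1)) t := by
    have := hd.hasFDerivAt.comp_hasDerivAt (f := fun s : ℝ => (s, x)) t
      ((hasDerivAt_id t).prodMk (hasDerivAt_const t x))
    simpa using this.clm_apply (hasDerivAt_const t ((0 : ℝ), (1 : ℝ)))
  have h₂ : HasDerivAt (fun y => fderiv ℝ F (t, y) (1, 0))
      (fderiv ℝ (fderiv ℝ F) (t, x) (0, 1) (1, 0)) x := by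
    have := hd.hasFDerivAt.comp_hasDerivAt (f := fun y : ℝ => (t, y)) x
      ((hasDerivAt_const x t).prodMk (hasDerivAt_id x))
    simpa using this.clm_apply (hasDerivAt_const x ((1 : ℝ), (0 : ℝ)))
  have e₁ : (fun s => deriv (f s) x) =ᶠ[𝓝 t] fun s => fderiv ℝ F (s, x) (0, 1) := by
    filter_upwards [hI.mem_nhds ht] with s hs
    exact (hasDerivAt_snd_of_contDiffOn hI hf hs x).deriv
  have e₂ : (fun y => deriv (fun s => f s y) t) = fun y => fderiv ℝ F (t, y) (1, 0) :=
    funext fun y => (hasDerivAt_fst_of_contDiffOn hI hf ht y).deriv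
  rw [e₁.deriv_eq, e₂, h₁.deriv, h₂.deriv, hsymm]

/-- Differentiation under the integral sign for a smooth integrand. -/
theorem hasDerivAt_intervalIntegral_of_contDiffOn (hI : IsOpen I)
    (hf : ContDiffOn ℝ ∞ (fun p : ℝ × ℝ => f p.1 p.2) (I ×ˢ univ)) {t : ℝ} (ht : t ∈ I)
    (a b : ℝ) :
    HasDerivAt (fun s => ∫ x in a..b, f s x) (∫ x in a..b, deriv (fun s => f s x) t) t := by
  obtain ⟨ε, hε, hball⟩ := Metric.nhds_basis_closedBall.mem_iff.1 (hI.mem_nhds ht)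
  have hdf := contDiffOn_deriv_fst hI hf
  obtain ⟨C, hC⟩ := ((isCompact_closedBall t ε).prod (isCompact_uIcc (a := a) (b := b))
    ).exists_bound_of_continuousOn (hdf.continuousOn.mono (prod_mono hball (subset_univ _)))
  refine (intervalIntegral.hasDerivAt_integral_of_dominated_loc_of_deriv_le
    (F' := fun s x => deriv (fun r => f r x) s) (bound := fun _ => C)
    (Metric.closedBall_mem_nhds t hε) ?_ ?_ ?_ ?_ intervalIntegrable_const ?_).2
  · filter_upwards [hI.mem_nhds ht] with s hs
    exact (contDiff_snd_of_contDiffOn hf hs).continuous.aestronglyMeasurable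
  · exact (contDiff_snd_of_contDiffOn hf ht).continuous.intervalIntegrable _ _
  · exact (contDiff_snd_of_contDiffOn (f := fun s x => deriv (fun r => f r x) s) hdf
      ht).continuous.aestronglyMeasurable
  · exact .of_forall fun x hx s hs => hC (s, x) ⟨hs, uIoc_subset_uIcc hx⟩
  · exact .of_forall fun x _ s hs =>
      (hasDerivAt_fst_of_contDiffOn hI hf (hball hs) x).differentiableAt.hasDerivAt

end SmoothOnStrip

theorem Function.Periodic.deriv_periodic {g : ℝ → ℝ} {c : ℝ} (hg : Function.Periodic g c) :
    Function.Periodic (deriv g) c := fun x => by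
  rw [← deriv_comp_add_const, funext hg]

/-- Integration by parts over a period: the first variation of the energy in the direction
`v = -(w ^ n * J)'`, where `J = w''' + α² w' - sin`, is `-∫ w ^ n * J²`. -/
theorem integral_energy_variation (n α : ℝ) {w v : ℝ → ℝ} (hw : ContDiff ℝ ∞ w)
    (hv : ContDiff ℝ ∞ v) (hpos : ∀ x, 0 < w x) (hwper : Function.Periodic w (2 * π))
    (hvper : Function.Periodic v (2 * π))
    (heq : ∀ x, v x + deriv (fun y => w y ^ n *
      (deriv (deriv (deriv w)) y + α ^ 2 * deriv w y - Real.sin y)) x = 0) :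
    (∫ x in (-π)..π, (deriv w x * deriv v x - α ^ 2 * (w x * v x) - v x * Real.cos x)) =
      -∫ x in (-π)..π, w x ^ n *
        (deriv (deriv (deriv w)) x + α ^ 2 * deriv w x - Real.sin x) ^ 2 := by
  have hw₁ : ContDiff ℝ ∞ (deriv w) := (contDiff_infty_iff_deriv.1 hw).2
  have hw₂ : ContDiff ℝ ∞ (deriv (deriv w)) := (contDiff_infty_iff_deriv.1 hw₁).2
  have hw₃ : ContDiff ℝ ∞ (deriv (deriv (deriv w))) := (contDiff_infty_iff_deriv.1 hw₂).2
  have hv₁ : ContDiff ℝ ∞ (deriv v) := (contDiff_infty_iff_deriv.1 hv).2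
  set J : ℝ → ℝ := fun x => deriv (deriv (deriv w)) x + α ^ 2 * deriv w x - Real.sin x with hJ
  have hJs : ContDiff ℝ ∞ J := (hw₃.add (contDiff_const.mul hw₁)).sub Real.contDiff_sin
  have hpow : ContDiff ℝ ∞ (fun x => w x ^ n) := hw.rpow_const_of_ne fun x => (hpos x).ne'
  have hP : ContDiff ℝ ∞ (fun x => w x ^ n * J x) := hpow.mul hJs
  have hasDeriv : ∀ {g : ℝ → ℝ}, ContDiff ℝ ∞ g → ∀ x, HasDerivAt g (deriv g x) x :=
    fun hg x => (hg.differentiable (by simp) x).hasDerivAt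
  have hH : ∀ x, HasDerivAt
      (fun y => deriv w y * v y +
        (deriv (deriv w) y + α ^ 2 * w y + Real.cos y) * (w y ^ n * J y))
      ((deriv w x * deriv v x - α ^ 2 * (w x * v x) - v x * Real.cos x) +
        w x ^ n * J x ^ 2) x := by
    intro x
    have hPx : HasDerivAt (fun y => w y ^ n * J y) (-v x) x := by
      rw [← eq_neg_of_add_eq_zero_right (heq x)]
      exact hasDeriv hP x
    refine (((hasDeriv hw₁ x).mul (hasDeriv hv x)).add
      ((((hasDeriv hw₂ x).add ((hasDeriv hw x).const_mul (α ^ 2))).add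
        (Real.hasDerivAt_cos x)).mul hPx)).congr_deriv ?_
    simp only [hJ, Pi.add_apply]
    ring
  have hcont₁ : Continuous
      (fun x => deriv w x * deriv v x - α ^ 2 * (w x * v x) - v x * Real.cos x) :=
    ((hw₁.continuous.mul hv₁.continuous).sub
      (continuous_const.mul (hw.continuous.mul hv.continuous))).sub
      (hv.continuous.mul Real.continuous_cos)
  have hcont₂ : Continuous (fun x => w x ^ n * J x ^ 2) :=
    hpow.continuous.mul (hJs.continuous.pow 2)
  have key := intervalIntegral.integral_eq_sub_of_hasDerivAt (a := -π) (b := π)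
    (fun x _ => hH x) ((hcont₁.add hcont₂).intervalIntegrable _ _)
  have hπ : ∀ {g : ℝ → ℝ}, Function.Periodic g (2 * π) → g π = g (-π) := fun {g} hg => by
    rw [← hg (-π)]; congr 1; ring
  rw [intervalIntegral.integral_add (hcont₁.intervalIntegrable _ _)
    (hcont₂.intervalIntegrable _ _)] at key
  have hp₁ := hwper.deriv_periodic
  have hp₂ := hp₁.deriv_periodic
  simp only [hJ, hπ hwper, hπ hvper, hπ hp₁, hπ hp₂, hπ hp₂.deriv_periodic, Real.cos_neg,
    Real.sin_neg, Real.sin_pi, sub_self, neg_zero] at key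
  exact eq_neg_of_add_eq_zero_left key

/-- Energy dissipation identity: along a strictly positive classical
solution of the thin-film equation, for each `t > 0` the energy is differentiable in time
with `d/dt E(u(t,·)) = −∫ uⁿ (∂_θ³u + α²∂_θu − sin θ)² dθ ≤ 0`. -/
theorem energy_dissipation (n α : ℝ) (hn : 0 < n) (hα : 0 ≤ α)
    (u : ℝ → ℝ → ℝ) (hu : IsThinFilmSolution n α u) (t : ℝ) (ht : 0 < t) :
    HasDerivAt (fun s => energy α (u s))
      (-∫ θ in (-π)..π, u t θ ^ n *
        (deriv (deriv (deriv (u t))) θ + α^2 * deriv (u t) θ - Real.sin θ)^2) t ∧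
    (-∫ θ in (-π)..π, u t θ ^ n *
        (deriv (deriv (deriv (u t))) θ + α^2 * deriv (u t) θ - Real.sin θ)^2) ≤ 0 := by
  obtain ⟨hsmooth, hpos, hper, heq⟩ := hu
  have hI : IsOpen (Ioi (0 : ℝ)) := isOpen_Ioi
  have hf : ContDiffOn ℝ ∞ (fun p : ℝ × ℝ => u p.1 p.2) (Ioi (0 : ℝ) ×ˢ univ) :=
    hsmooth.mono (prod_mono Ioi_subset_Ici_self subset_rfl)
  have hfx := contDiffOn_deriv_snd hI hf
  have hw := contDiff_snd_of_contDiffOn hf ht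
  have hv : ContDiff ℝ ∞ (fun x => deriv (fun s => u s x) t) :=
    contDiff_snd_of_contDiffOn (f := fun s x => deriv (fun r => u r x) s)
      (contDiffOn_deriv_fst hI hf) ht
  have hw₁ : ContDiff ℝ ∞ (deriv (u t)) := (contDiff_infty_iff_deriv.1 hw).2
  have hv₁ := (contDiff_infty_iff_deriv.1 hv).2
  have hut : ∀ x, HasDerivAt (fun s => u s x) (deriv (fun s => u s x) t) t := fun x =>
    (hasDerivAt_fst_of_contDiffOn hI hf ht x).differentiableAt.hasDerivAt
  have huxt : ∀ x, HasDerivAt (fun s => deriv (u s) x)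
      (deriv (fun y => deriv (fun s => u s y) t) x) t := fun x => by
    rw [← deriv_deriv_comm hI hf ht x]
    exact (hasDerivAt_fst_of_contDiffOn (f := fun s => deriv (u s)) hI hfx ht
      x).differentiableAt.hasDerivAt
  refine ⟨?_, neg_nonpos.2 (intervalIntegral.integral_nonneg (by linarith [Real.pi_pos])
    fun x _ => mul_nonneg (Real.rpow_nonneg (hpos t x ht.le).le _) (sq_nonneg _))⟩
  rw [← integral_energy_variation n α hw hv (fun x => hpos t x ht.le) (hper t)
    (fun x => by simp only [hper _ x]) (fun x => heq t x ht)]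
  have h₁ := hasDerivAt_intervalIntegral_of_contDiffOn hI
    (f := fun s x => (deriv (u s) x) ^ 2 - α ^ 2 * (u s x) ^ 2)
    ((hfx.pow 2).sub (contDiffOn_const.mul (hf.pow 2))) ht (-π) π
  have h₂ := hasDerivAt_intervalIntegral_of_contDiffOn hI (f := fun s x => u s x * Real.cos x)
    (hf.mul (Real.contDiff_cos.comp contDiff_snd).contDiffOn) ht (-π) π
  refine ((h₁.const_mul (1 / 2)).sub h₂).congr_deriv ?_
  have e₁ : ∀ x, deriv (fun s => (deriv (u s) x) ^ 2 - α ^ 2 * (u s x) ^ 2) t =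
      2 * (deriv (u t) x * deriv (fun y => deriv (fun s => u s y) t) x -
        α ^ 2 * (u t x * deriv (fun s => u s x) t)) := fun x => by
    refine ((((huxt x).pow 2).sub (((hut x).pow 2).const_mul (α ^ 2))).congr_deriv ?_).deriv
    simp only [Nat.cast_ofNat, Nat.add_one_sub_one, pow_one]
    ring
  have e₂ : ∀ x, deriv (fun s => u s x * Real.cos x) t =
      deriv (fun s => u s x) t * Real.cos x := fun x => ((hut x).mul_const _).deriv
  simp only [e₁, e₂]
  rw [intervalIntegral.integral_const_mul, ← mul_assoc, one_div_mul_cancel two_ne_zero, one_mul,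
    ← intervalIntegral.integral_sub]
  · exact ((hw₁.continuous.mul hv₁.continuous).sub
      (continuous_const.mul (hw.continuous.mul hv.continuous))).intervalIntegrable _ _
  · exact (hv.continuous.mul Real.continuous_cos).intervalIntegrable _ _
end

section
/- Let u : ℝ → ℝ be a smooth, strictly positive, 2π-periodic function. Then ∫_{-π}^{π} u(θ)^{-1/2} u'(θ) u'''(θ) dθ = − ∫_{-π}^{π} u(θ)^{-1/2} ( u''(θ) − (1/2) u(θ)^{-1} u'(θ)² )² dθ = −4 ∫_{-π}^{π} u(θ)^{1/2} ( (√u)''(θ) )² dθ, where (√u)'' denotes the second derivative of the function θ ↦ √(u(θ)). -/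
open MeasureTheory Real Set Filter

/-- The derivative of a periodic function is periodic. -/
theorem Function.Periodic.deriv_periodic_s13 {f : ℝ → ℝ} {c : ℝ} (hf : Function.Periodic f c) :
    Function.Periodic (deriv f) c := fun x => by
  rw [← deriv_comp_add_const, funext hf]

/-- The primitive whose increment over a period is the difference of the two sides of the first
identity. -/
theorem hasDerivAt_entropy_primitive {u v w : ℝ → ℝ} {z x : ℝ} (hu : HasDerivAt u (v x) x)
    (hv : HasDerivAt v (w x) x) (hw : HasDerivAt w z x) (hpos : 0 < u x) :
    HasDerivAt
      (fun y => u y ^ (-(1 : ℝ) / 2) * (v y * w y - (1 / 6) * (u y)⁻¹ * v y ^ 3))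
      (u x ^ (-(1 : ℝ) / 2) * v x * z +
        u x ^ (-(1 : ℝ) / 2) * (w x - (1 / 2) * (u x)⁻¹ * v x ^ 2) ^ 2) x := by
  have hne := hpos.ne'
  refine ((hu.rpow_const (p := -(1 : ℝ) / 2) (Or.inl hne)).mul
    ((hv.mul hw).sub (((hu.inv hne).const_mul (1 / 6)).mul (hv.pow 3)))).congr_deriv ?_
  rw [Real.rpow_sub_one hne]
  simp only [Pi.mul_apply, Pi.sub_apply, Pi.pow_apply, Pi.inv_apply]
  field_simp
  ring

/-- The second derivative of the square root of a positive function. -/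
theorem deriv_deriv_rpow_half {u v w : ℝ → ℝ} (hu : ∀ x, HasDerivAt u (v x) x)
    (hv : ∀ x, HasDerivAt v (w x) x) (hpos : ∀ x, 0 < u x) (x : ℝ) :
    deriv (deriv (fun y => u y ^ ((1 : ℝ) / 2))) x =
      (1 / 2) * u x ^ (-(1 : ℝ) / 2) * (w x - (1 / 2) * (u x)⁻¹ * v x ^ 2) := by
  have hne := fun y => (hpos y).ne'
  have hderiv : deriv (fun y => u y ^ ((1 : ℝ) / 2)) =
      fun y => (1 / 2) * (v y * u y ^ (-(1 : ℝ) / 2)) := by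
    funext y
    rw [((hu y).rpow_const (Or.inl (hne y))).deriv,
      show (1 : ℝ) / 2 - 1 = -(1 : ℝ) / 2 by norm_num]
    ring
  rw [hderiv]
  refine ((((hv x).mul ((hu x).rpow_const (p := -(1 : ℝ) / 2)
    (Or.inl (hne x)))).const_mul (1 / 2)).congr_deriv ?_).deriv
  rw [Real.rpow_sub_one (hne x)]
  have := hne x
  field_simp
  ring

/-- Integration-by-parts identity: for a smooth, strictly positive,
`2π`-periodic `u`,
`∫ u^{−1/2} u' u''' = −∫ u^{−1/2} (u'' − (1/2)u^{−1}u'²)² = −4∫ u^{1/2} ((√u)'')²`. -/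
theorem entropy_integration_by_parts (u : ℝ → ℝ)
    (hsmooth : ContDiff ℝ (⊤ : ℕ∞) u) (hpos : ∀ θ : ℝ, 0 < u θ)
    (hper : Function.Periodic u (2*π)) :
    (∫ θ in (-π)..π,
        u θ ^ (-(1:ℝ)/2) * deriv u θ * deriv (deriv (deriv u)) θ) =
      -∫ θ in (-π)..π,
        u θ ^ (-(1:ℝ)/2) *
          (deriv (deriv u) θ - (1/2) * (u θ)⁻¹ * (deriv u θ)^2)^2 ∧
    (∫ θ in (-π)..π,
        u θ ^ (-(1:ℝ)/2) * deriv u θ * deriv (deriv (deriv u)) θ) =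
      -4 * ∫ θ in (-π)..π,
        u θ ^ ((1:ℝ)/2) * (deriv (deriv (fun x => u x ^ ((1:ℝ)/2))) θ)^2 := by
  have hsmooth₁ : ContDiff ℝ (⊤ : ℕ∞) (deriv u) := (contDiff_infty_iff_deriv.1 hsmooth).2
  have hsmooth₂ : ContDiff ℝ (⊤ : ℕ∞) (deriv (deriv u)) :=
    (contDiff_infty_iff_deriv.1 hsmooth₁).2
  have hcont₃ : Continuous (deriv (deriv (deriv u))) :=
    (contDiff_infty_iff_deriv.1 hsmooth₂).2.continuous
  have hu := fun x => ((contDiff_infty_iff_deriv.1 hsmooth).1 x).hasDerivAt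
  have hv := fun x => ((contDiff_infty_iff_deriv.1 hsmooth₁).1 x).hasDerivAt
  have hw := fun x => ((contDiff_infty_iff_deriv.1 hsmooth₂).1 x).hasDerivAt
  have hcont := hsmooth.continuous
  have hcont₁ := hsmooth₁.continuous
  have hcont₂ := hsmooth₂.continuous
  have hne : ∀ x, u x ≠ 0 := fun x => (hpos x).ne'
  have hrpow : Continuous fun x => u x ^ (-(1 : ℝ) / 2) :=
    hcont.rpow_const fun x => Or.inl (hne x)
  have hinv : Continuous fun x => (u x)⁻¹ := hcont.inv₀ hne
  have hleft : Continuous fun θ =>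
      u θ ^ (-(1 : ℝ) / 2) * deriv u θ * deriv (deriv (deriv u)) θ := by fun_prop
  have hright : Continuous fun θ => u θ ^ (-(1 : ℝ) / 2) *
      (deriv (deriv u) θ - (1 / 2) * (u θ)⁻¹ * (deriv u θ) ^ 2) ^ 2 := by fun_prop
  have hends : ∀ {f : ℝ → ℝ}, Function.Periodic f (2 * π) → f π = f (-π) := fun {f} hf => by
    rw [← hf (-π)]
    congr 1
    ring
  have hsum := intervalIntegral.integral_eq_sub_of_hasDerivAt (a := -π) (b := π)
    (fun x _ => hasDerivAt_entropy_primitive (hu x) (hv x) (hw x) (hpos x))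
    ((hleft.add hright).intervalIntegrable _ _)
  rw [intervalIntegral.integral_add (hleft.intervalIntegrable _ _)
    (hright.intervalIntegrable _ _), hends hper, hends hper.deriv_periodic_s13,
    hends hper.deriv_periodic_s13.deriv_periodic_s13, sub_self] at hsum
  have hfirst := eq_neg_of_add_eq_zero_left hsum
  refine ⟨hfirst, hfirst.trans ?_⟩
  rw [← intervalIntegral.integral_neg, ← intervalIntegral.integral_const_mul]
  refine intervalIntegral.integral_congr fun θ _ => ?_
  have hprod : u θ ^ ((1 : ℝ) / 2) * u θ ^ (-(1 : ℝ) / 2) = 1 := by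
    rw [← Real.rpow_add (hpos θ)]
    norm_num
  simp only [deriv_deriv_rpow_half hu hv hpos θ]
  linear_combination u θ ^ (-(1 : ℝ) / 2) *
    (deriv (deriv u) θ - (1 / 2) * (u θ)⁻¹ * (deriv u θ) ^ 2) ^ 2 * hprod
end

section
/- Let 0 ≤ α < 1, n > 0, and M > 0 with M(1 − α²) > 2π, let u*(θ) = M/(2π) + cos(θ)/(1 − α²) be the strictly positive energy minimizer of mass M, let m = min u* = M/(2π) − 1/(1 − α²) > 0, and set μ = (1 − α²) mⁿ and ε₀ = ((1 − α²)π/2) m². Let u be a strictly positive classical solution of the thin-film equation ∂_t u + ∂_θ( uⁿ ( ∂_θ³ u + α² ∂_θ u − sin θ ) ) = 0, 2π-periodic in θ, of mass M, whose initial energy satisfies E(u(0,·)) < E(u*) + ε₀. Then there exists a constant K₁ such that ( ∫_{-π}^{π} ( (u − u*)² + (∂_θ(u − u*))² )(t,θ) dθ )^{1/2} ≤ K₁ e^{−μ t} for all t ≥ 0. -/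
open MeasureTheory Real Set Filter

/-- Integration by parts for `2π`-periodic functions over one period. -/
theorem integral_mul_deriv_of_periodic {f f' g g' : ℝ → ℝ}
    (hf : ∀ x, HasDerivAt f (f' x) x) (hg : ∀ x, HasDerivAt g (g' x) x)
    (hf' : Continuous f') (hg' : Continuous g')
    (pf : Function.Periodic f (2 * π)) (pg : Function.Periodic g (2 * π)) :
    ∫ x in (-π)..π, f x * g' x = -∫ x in (-π)..π, f' x * g x := by
  rw [intervalIntegral.integral_mul_deriv_eq_deriv_mul (fun x _ => hf x) (fun x _ => hg x)
    (hf'.intervalIntegrable _ _) (hg'.intervalIntegrable _ _)]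
  have h1 : f π = f (-π) := by rw [← pf (-π)]; ring_nf
  have h2 : g π = g (-π) := by rw [← pg (-π)]; ring_nf
  rw [h1, h2]; ring

theorem integral_deriv_of_periodic {f f' : ℝ → ℝ}
    (hf : ∀ x, HasDerivAt f (f' x) x) (hf' : Continuous f')
    (pf : Function.Periodic f (2 * π)) :
    ∫ x in (-π)..π, f' x = 0 := by
  have h := integral_mul_deriv_of_periodic (f := fun _ => 1) (f' := fun _ => 0)
    (fun x => hasDerivAt_const x _) hf continuous_const hf' (fun _ => rfl) pf
  simpa using h

theorem periodic_of_hasDerivAt {f f' : ℝ → ℝ} {c : ℝ}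
    (hf : ∀ x, HasDerivAt f (f' x) x) (pf : Function.Periodic f c) :
    Function.Periodic f' c := by
  intro x
  have h := (hf (x + c)).comp_add_const x c
  have e : (fun y => f (y + c)) = f := funext pf
  rw [e] at h
  exact h.unique (hf x)

/-- **Wirtinger's inequality** on the circle. -/
theorem integral_sq_le_integral_deriv_sq {f f' : ℝ → ℝ}
    (hf : ∀ x, HasDerivAt f (f' x) x) (hf' : Continuous f')
    (pf : Function.Periodic f (2 * π)) (h0 : ∫ x in (-π)..π, f x = 0) :
    ∫ x in (-π)..π, f x ^ 2 ≤ ∫ x in (-π)..π, f' x ^ 2 := by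
  have hab : -π < π := by linarith [pi_pos]
  have hfc : Continuous f := continuous_iff_continuousAt.2 fun x => (hf x).continuousAt
  have memLp (g : ℝ → ℝ) (hg : Continuous g) :
      MemLp (fun x => (g x : ℂ)) 2 (volume.restrict (Ioc (-π) π)) := by
    obtain ⟨C, hC⟩ :=
      (isCompact_Icc (a := -π) (b := π)).exists_bound_of_continuousOn hg.continuousOn
    refine MemLp.of_bound (by fun_prop) C ?_
    filter_upwards [ae_restrict_mem measurableSet_Ioc] with x hx
    simpa using hC x (Ioc_subset_Icc_self hx)
  have s1 := hasSum_sq_fourierCoeffOn hab (memLp f hfc)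
  have s2 := hasSum_sq_fourierCoeffOn hab (memLp f' hf')
  have hle : ∀ i : ℤ, ‖fourierCoeffOn hab (fun x => (f x : ℂ)) i‖ ^ 2 ≤
      ‖fourierCoeffOn hab (fun x => (f' x : ℂ)) i‖ ^ 2 := by
    intro i
    rcases eq_or_ne i 0 with rfl | hi
    · have : fourierCoeffOn hab (fun x => (f x : ℂ)) 0 = 0 := by
        rw [fourierCoeffOn_eq_integral]
        simp [intervalIntegral.integral_ofReal, h0]
      rw [this]; simp
    · rw [fourierCoeffOn_of_hasDerivAt hab hi (fun x _ => (hf x).ofReal_comp)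
        ((Complex.continuous_ofReal.comp hf').intervalIntegrable _ _)]
      have h1 : f π = f (-π) := by rw [← pf (-π)]; ring_nf
      rw [h1, sub_self, mul_zero, zero_sub]
      have hpi : (π : ℂ) ≠ 0 := by exact_mod_cast pi_ne_zero
      have hi' : (i : ℂ) ≠ 0 := by exact_mod_cast hi
      have e : ∀ z : ℂ, 1 / (-2 * π * Complex.I * i) * -(((π : ℝ) - ((-π : ℝ) : ℂ)) * z)
          = (Complex.I * i)⁻¹ * z := by
        intro z
        push_cast
        field_simp
        ring
      rw [e, norm_mul, norm_inv, norm_mul, Complex.norm_I, one_mul, mul_pow]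
      have hi1 : (1 : ℝ) ≤ ‖(i : ℂ)‖ := by
        rw [Complex.norm_intCast]
        exact_mod_cast Int.one_le_abs hi
      have : (‖(i : ℂ)‖⁻¹) ^ 2 ≤ 1 := pow_le_one₀ (by positivity) (inv_le_one_of_one_le₀ hi1)
      exact mul_le_of_le_one_left (by positivity) this
  have h := hasSum_le hle s1 s2
  simp only [Complex.norm_real, Real.norm_eq_abs, sq_abs, smul_eq_mul] at h
  exact le_of_mul_le_mul_left h (by rw [inv_pos]; linarith)

theorem sq_integral_mul_le {a b : ℝ} (hab : a ≤ b) {f g : ℝ → ℝ} (hf : Continuous f)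
    (hg : Continuous g) :
    (∫ x in a..b, f x * g x) ^ 2 ≤ (∫ x in a..b, f x ^ 2) * ∫ x in a..b, g x ^ 2 := by
  have h : ∀ y : ℝ, 0 ≤ (∫ x in a..b, g x ^ 2) * (y * y) + (2 * ∫ x in a..b, f x * g x) * y
      + ∫ x in a..b, f x ^ 2 := by
    intro y
    have e : ∫ x in a..b, (f x + y * g x) ^ 2 = (∫ x in a..b, g x ^ 2) * (y * y)
        + (2 * ∫ x in a..b, f x * g x) * y + ∫ x in a..b, f x ^ 2 := by
      rw [← intervalIntegral.integral_const_mul, ← intervalIntegral.integral_mul_const,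
        ← intervalIntegral.integral_mul_const, ← intervalIntegral.integral_add,
        ← intervalIntegral.integral_add]
      · congr 1; ext x; ring
      all_goals exact Continuous.intervalIntegrable (by fun_prop) _ _
    rw [← e]
    exact intervalIntegral.integral_nonneg hab fun x _ => sq_nonneg _
  have := discrim_le_zero h
  rw [discrim] at this
  nlinarith

theorem integral_comp_add_right_of_periodic {h : ℝ → ℝ} (ph : Function.Periodic h (2 * π))
    (c : ℝ) : ∫ x in (-π)..π, h (x + c) = ∫ x in (-π)..π, h x := by
  rw [intervalIntegral.integral_comp_add_right]
  have e := ph.intervalIntegral_add_eq (-π + c) (-π)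
  rwa [show -π + c + 2 * π = π + c by ring, show -π + 2 * π = π by ring] at e

theorem integral_sin_sq_period : ∫ x in (-π)..π, sin x ^ 2 = π := by
  rw [integral_sin_sq]; simp

theorem integral_cos_sq_period : ∫ x in (-π)..π, cos x ^ 2 = π := by
  rw [integral_cos_sq]; simp

theorem integral_sin_mul_cos_period : ∫ x in (-π)..π, sin x * cos x = 0 := by
  rw [integral_sin_mul_cos₁]; simp

theorem integral_id_mul_sin_period : ∫ x in (-π)..π, x * sin x = 2 * π := by
  have h := intervalIntegral.integral_mul_deriv_eq_deriv_mul (a := -π) (b := π)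
    (u := fun x => x) (v := fun x => -cos x) (u' := fun _ => 1) (v' := sin)
    (fun x _ => hasDerivAt_id' x) (fun x _ => by simpa using (hasDerivAt_cos x).fun_neg)
    (continuous_const.intervalIntegrable _ _) (continuous_sin.intervalIntegrable _ _)
  rw [h]; simp; ring

theorem integral_id_mul_cos_period : ∫ x in (-π)..π, x * cos x = 0 := by
  have h := intervalIntegral.integral_mul_deriv_eq_deriv_mul (a := -π) (b := π)
    (u := fun x => x) (v := sin) (u' := fun _ => 1) (v' := cos)
    (fun x _ => hasDerivAt_id' x) (fun x _ => hasDerivAt_sin x)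
    (continuous_const.intervalIntegrable _ _) (continuous_cos.intervalIntegrable _ _)
  rw [h]; simp

theorem sq_add_firstCoeff_le {g g' : ℝ → ℝ}
    (hg : ∀ x, HasDerivAt g (g' x) x) (hg' : Continuous g')
    (pg : Function.Periodic g (2 * π)) (h0 : ∫ x in (-π)..π, g x = 0) {p q : ℝ}
    (hp : ∫ x in (-π)..π, g x * cos x = π * p) (hq : ∫ x in (-π)..π, g x * sin x = π * q) :
    (g π + p) ^ 2 ≤ (π / 6 - 1 / π) * ((∫ x in (-π)..π, g' x ^ 2) - π * (p ^ 2 + q ^ 2)) := by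
  have hπ := pi_pos
  have hgc : Continuous g := continuous_iff_continuousAt.2 fun x => (hg x).continuousAt
  have i1 : ∫ x in (-π)..π, g' x * sin x = -(π * p) := by
    have := integral_mul_deriv_of_periodic hg hasDerivAt_sin hg' continuous_cos pg sin_periodic
    linarith
  have i2 : ∫ x in (-π)..π, g' x * cos x = π * q := by
    have := integral_mul_deriv_of_periodic (g' := fun x => -sin x) hg hasDerivAt_cos hg'
      (by fun_prop) pg cos_periodic
    simp only [mul_neg, intervalIntegral.integral_neg] at this
    linarith
  have i3 : ∫ x in (-π)..π, g' x * x = 2 * π * g π := by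
    have h := intervalIntegral.integral_deriv_mul_eq_sub (a := -π) (b := π)
      (u := g) (v := fun x => x) (u' := g') (v' := fun _ => 1) (fun x _ => hg x)
      (fun x _ => hasDerivAt_id' x) (hg'.intervalIntegrable _ _)
      (continuous_const.intervalIntegrable _ _)
    rw [intervalIntegral.integral_add] at h
    · have h1 : g (-π) = g π := by rw [← pg (-π)]; ring_nf
      simp only [mul_one] at h
      rw [h0, h1] at h
      linarith
    all_goals exact Continuous.intervalIntegrable (by fun_prop) _ _
  have hfK : ∫ x in (-π)..π, (g' x + p * sin x - q * cos x) * (x / (2 * π) - sin x / π)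
      = g π + p := by
    have e : ∀ x, (g' x + p * sin x - q * cos x) * (x / (2 * π) - sin x / π) =
        1 / (2 * π) * (g' x * x) - 1 / π * (g' x * sin x) + p / (2 * π) * (x * sin x)
        - p / π * sin x ^ 2 - q / (2 * π) * (x * cos x) + q / π * (sin x * cos x) := by
      intro x; field_simp; ring
    simp_rw [e]
    rw [intervalIntegral.integral_add, intervalIntegral.integral_sub,
      intervalIntegral.integral_sub, intervalIntegral.integral_add, intervalIntegral.integral_sub]
    · simp only [intervalIntegral.integral_const_mul]
      rw [i1, i3, integral_sin_sq_period, integral_id_mul_sin_period, integral_id_mul_cos_period,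
        integral_sin_mul_cos_period]
      field_simp; ring
    all_goals exact Continuous.intervalIntegrable (by fun_prop) _ _
  have hff : ∫ x in (-π)..π, (g' x + p * sin x - q * cos x) ^ 2
      = (∫ x in (-π)..π, g' x ^ 2) - π * (p ^ 2 + q ^ 2) := by
    have e : ∀ x, (g' x + p * sin x - q * cos x) ^ 2 =
        g' x ^ 2 + 2 * p * (g' x * sin x) - 2 * q * (g' x * cos x) + p ^ 2 * sin x ^ 2
        + q ^ 2 * cos x ^ 2 - 2 * p * q * (sin x * cos x) := by
      intro x; ring
    simp_rw [e]
    rw [intervalIntegral.integral_sub, intervalIntegral.integral_add,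
      intervalIntegral.integral_add, intervalIntegral.integral_sub, intervalIntegral.integral_add]
    · simp only [intervalIntegral.integral_const_mul]
      rw [i1, i2, integral_sin_sq_period, integral_cos_sq_period, integral_sin_mul_cos_period]
      ring
    all_goals exact Continuous.intervalIntegrable (by fun_prop) _ _
  have hKK : ∫ x in (-π)..π, (x / (2 * π) - sin x / π) ^ 2 = π / 6 - 1 / π := by
    have e : ∀ x, (x / (2 * π) - sin x / π) ^ 2 =
        1 / (4 * π ^ 2) * x ^ 2 - 1 / π ^ 2 * (x * sin x) + 1 / π ^ 2 * sin x ^ 2 := by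
      intro x; field_simp; ring
    simp_rw [e]
    rw [intervalIntegral.integral_add, intervalIntegral.integral_sub]
    · simp only [intervalIntegral.integral_const_mul]
      rw [integral_sin_sq_period, integral_id_mul_sin_period, integral_pow]
      field_simp; ring
    all_goals exact Continuous.intervalIntegrable (by fun_prop) _ _
  have h := sq_integral_mul_le (a := -π) (b := π) (by linarith)
    (f := fun x => g' x + p * sin x - q * cos x)
    (g := fun x => x / (2 * π) - sin x / π) (by fun_prop) (by fun_prop)
  rw [hfK, hff, hKK] at h
  linarith

/-- The part of a mean-zero periodic function orthogonal to the first Fourier modes is controlled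
pointwise by the Dirichlet integral. -/
theorem sq_sub_firstModes_le {v v' : ℝ → ℝ}
    (hv : ∀ x, HasDerivAt v (v' x) x) (hv' : Continuous v')
    (pv : Function.Periodic v (2 * π)) (h0 : ∫ x in (-π)..π, v x = 0) {a b : ℝ}
    (ha : ∫ x in (-π)..π, v x * cos x = π * a) (hb : ∫ x in (-π)..π, v x * sin x = π * b)
    (y : ℝ) :
    (v y - (a * cos y + b * sin y)) ^ 2 ≤
      (π / 6 - 1 / π) * ((∫ x in (-π)..π, v' x ^ 2) - π * (a ^ 2 + b ^ 2)) := by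
  have hvc : Continuous v := continuous_iff_continuousAt.2 fun x => (hv x).continuousAt
  have pv' := periodic_of_hasDerivAt hv pv
  have c1 : ∫ x in (-π)..π, v (x + (y - π)) * cos x = π * -(a * cos y + b * sin y) := by
    have h := integral_comp_add_right_of_periodic (h := fun x => v x * cos (x - (y - π)))
      (fun x => by
        have := cos_periodic (x - (y - π))
        simp only [pv x, ← this]; ring_nf) (y - π)
    simp only [add_sub_cancel_right] at h
    rw [h]
    have e : ∀ x, v x * cos (x - (y - π)) = -cos y * (v x * cos x) - sin y * (v x * sin x) := by
      intro x
      rw [show x - (y - π) = x - y + π by ring, cos_add_pi, cos_sub]; ring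
    simp_rw [e]
    rw [intervalIntegral.integral_sub]
    · simp only [intervalIntegral.integral_const_mul]
      rw [ha, hb]; ring
    all_goals exact Continuous.intervalIntegrable (by fun_prop) _ _
  have c2 : ∫ x in (-π)..π, v (x + (y - π)) * sin x = π * (a * sin y - b * cos y) := by
    have h := integral_comp_add_right_of_periodic (h := fun x => v x * sin (x - (y - π)))
      (fun x => by
        have := sin_periodic (x - (y - π))
        simp only [pv x, ← this]; ring_nf) (y - π)
    simp only [add_sub_cancel_right] at h
    rw [h]
    have e : ∀ x, v x * sin (x - (y - π)) = sin y * (v x * cos x) - cos y * (v x * sin x) := by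
      intro x
      rw [show x - (y - π) = x - y + π by ring, sin_add_pi, sin_sub]; ring
    simp_rw [e]
    rw [intervalIntegral.integral_sub]
    · simp only [intervalIntegral.integral_const_mul]
      rw [ha, hb]; ring
    all_goals exact Continuous.intervalIntegrable (by fun_prop) _ _
  have h := sq_add_firstCoeff_le (g := fun x => v (x + (y - π))) (g' := fun x => v' (x + (y - π)))
    (fun x => (hv _).comp_add_const x _) (by fun_prop)
    (fun x => by
      have := pv (x + (y - π))
      simp only [← this]; ring_nf)
    (by rw [integral_comp_add_right_of_periodic pv, h0]) c1 c2
  rw [integral_comp_add_right_of_periodic (h := fun x => v' x ^ 2)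
    (fun x => by simp only [pv' x])] at h
  have e1 : (-(a * cos y + b * sin y)) ^ 2 + (a * sin y - b * cos y) ^ 2 = a ^ 2 + b ^ 2 := by
    have := sin_sq_add_cos_sq y
    linear_combination (a ^ 2 + b ^ 2) * this
  rw [e1] at h
  simpa [sub_eq_add_neg] using h

theorem dirichlet_le_quadraticForm {v v' : ℝ → ℝ} (α : ℝ)
    (hv : ∀ x, HasDerivAt v (v' x) x) (hv' : Continuous v')
    (pv : Function.Periodic v (2 * π)) (h0 : ∫ x in (-π)..π, v x = 0) :
    (1 - α ^ 2) * ∫ x in (-π)..π, v' x ^ 2 ≤ ∫ x in (-π)..π, (v' x ^ 2 - α ^ 2 * v x ^ 2) := by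
  have hvc : Continuous v := continuous_iff_continuousAt.2 fun x => (hv x).continuousAt
  rw [intervalIntegral.integral_sub (Continuous.intervalIntegrable (by fun_prop) _ _)
    (Continuous.intervalIntegrable (by fun_prop) _ _), intervalIntegral.integral_const_mul]
  have := integral_sq_le_integral_deriv_sq hv hv' pv h0
  nlinarith [sq_nonneg α]

/-- The quadratic form of the energy is controlled by its dissipation. -/
theorem quadraticForm_le_dissipation {v v₁ v₂ v₃ : ℝ → ℝ} {α : ℝ} (hα : α ^ 2 < 1)
    (hv : ∀ x, HasDerivAt v (v₁ x) x) (hv₁ : ∀ x, HasDerivAt v₁ (v₂ x) x)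
    (hv₂ : ∀ x, HasDerivAt v₂ (v₃ x) x) (hv₃ : Continuous v₃)
    (pv : Function.Periodic v (2 * π)) (h0 : ∫ x in (-π)..π, v x = 0) :
    (1 - α ^ 2) * ∫ x in (-π)..π, (v₁ x ^ 2 - α ^ 2 * v x ^ 2) ≤
      ∫ x in (-π)..π, (v₃ x + α ^ 2 * v₁ x) ^ 2 := by
  have hc : Continuous v := continuous_iff_continuousAt.2 fun x => (hv x).continuousAt
  have hc₁ : Continuous v₁ := continuous_iff_continuousAt.2 fun x => (hv₁ x).continuousAt
  have hc₂ : Continuous v₂ := continuous_iff_continuousAt.2 fun x => (hv₂ x).continuousAt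
  have p₁ := periodic_of_hasDerivAt hv pv
  have p₂ := periodic_of_hasDerivAt hv₁ p₁
  have hw0 : ∫ x in (-π)..π, (v₂ x + α ^ 2 * v x) = 0 := by
    rw [intervalIntegral.integral_add (Continuous.intervalIntegrable (by fun_prop) _ _)
      (Continuous.intervalIntegrable (by fun_prop) _ _), intervalIntegral.integral_const_mul, h0,
      integral_deriv_of_periodic hv₁ hc₂ p₁]
    simp
  have W1 := integral_sq_le_integral_deriv_sq (f := fun x => v₂ x + α ^ 2 * v x)
    (f' := fun x => v₃ x + α ^ 2 * v₁ x) (fun x => (hv₂ x).add ((hv x).const_mul _))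
    (by fun_prop) (fun x => by simp only [p₂ x, pv x]) hw0
  have W2 := integral_sq_le_integral_deriv_sq hv hc₁ pv h0
  have hQ := dirichlet_le_quadraticForm α hv hc₁ pv h0
  have e : ∫ x in (-π)..π, (v₁ x ^ 2 - α ^ 2 * v x ^ 2) =
      -∫ x in (-π)..π, v x * (v₂ x + α ^ 2 * v x) := by
    have i := integral_mul_deriv_of_periodic hv hv₁ hc₁ hc₂ pv p₁
    have e1 : ∀ x, v x * (v₂ x + α ^ 2 * v x) = v x * v₂ x + α ^ 2 * v x ^ 2 := fun x => by ring
    simp_rw [e1]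
    rw [intervalIntegral.integral_sub (Continuous.intervalIntegrable (by fun_prop) _ _)
      (Continuous.intervalIntegrable (by fun_prop) _ _),
      intervalIntegral.integral_add (Continuous.intervalIntegrable (by fun_prop) _ _)
      (Continuous.intervalIntegrable (by fun_prop) _ _), i]
    simp only [← sq]
    ring
  have cs := sq_integral_mul_le (a := -π) (b := π) (by linarith [pi_pos]) hc
    (g := fun x => v₂ x + α ^ 2 * v x) (by fun_prop)
  set Q := ∫ x in (-π)..π, (v₁ x ^ 2 - α ^ 2 * v x ^ 2)
  set D := ∫ x in (-π)..π, (v₃ x + α ^ 2 * v₁ x) ^ 2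
  set A := ∫ x in (-π)..π, v x ^ 2
  set B := ∫ x in (-π)..π, (v₂ x + α ^ 2 * v x) ^ 2
  have hA : 0 ≤ A :=
    intervalIntegral.integral_nonneg (by linarith [pi_pos]) fun x _ => sq_nonneg _
  have hB : 0 ≤ B :=
    intervalIntegral.integral_nonneg (by linarith [pi_pos]) fun x _ => sq_nonneg _
  have hAQ : (1 - α ^ 2) * A ≤ Q := le_trans (by gcongr) hQ
  have hQ2 : Q ^ 2 ≤ A * D := by
    rw [e, neg_sq]
    exact cs.trans (by gcongr)
  have hQ0 : 0 ≤ Q := le_trans (mul_nonneg (by linarith) hA) hAQ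
  rcases hQ0.eq_or_lt with h | h
  · rw [← h, mul_zero]; linarith
  · have : Q * ((1 - α ^ 2) * Q) ≤ Q * D := by nlinarith
    exact le_of_mul_le_mul_left this h

theorem pi_mul_firstCoeffs_sq_le {v v' : ℝ → ℝ}
    (hv : ∀ x, HasDerivAt v (v' x) x) (hv' : Continuous v')
    (pv : Function.Periodic v (2 * π)) (h0 : ∫ x in (-π)..π, v x = 0) {a b : ℝ}
    (ha : ∫ x in (-π)..π, v x * cos x = π * a) (hb : ∫ x in (-π)..π, v x * sin x = π * b) :
    π * (a ^ 2 + b ^ 2) ≤ ∫ x in (-π)..π, v' x ^ 2 := by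
  have h := (sq_nonneg _).trans (sq_sub_firstModes_le hv hv' pv h0 ha hb 0)
  have hκ : 0 < π / 6 - 1 / π := by
    have := pi_gt_three
    rw [sub_pos, div_lt_div_iff₀ (by linarith) (by linarith)]
    nlinarith
  linarith [(mul_nonneg_iff_of_pos_left hκ).1 h]

theorem sq_le_dirichlet {v v' : ℝ → ℝ}
    (hv : ∀ x, HasDerivAt v (v' x) x) (hv' : Continuous v')
    (pv : Function.Periodic v (2 * π)) (h0 : ∫ x in (-π)..π, v x = 0) (y : ℝ) :
    v y ^ 2 ≤ ∫ x in (-π)..π, v' x ^ 2 := by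
  obtain ⟨a, ha⟩ : ∃ a, ∫ x in (-π)..π, v x * cos x = π * a :=
    ⟨_, (mul_div_cancel₀ _ pi_ne_zero).symm⟩
  obtain ⟨b, hb⟩ : ∃ b, ∫ x in (-π)..π, v x * sin x = π * b :=
    ⟨_, (mul_div_cancel₀ _ pi_ne_zero).symm⟩
  have h1 := sq_sub_firstModes_le hv hv' pv h0 ha hb y
  have h2 := pi_mul_firstCoeffs_sq_le hv hv' pv h0 ha hb
  set V := ∫ x in (-π)..π, v' x ^ 2
  have hπ := pi_gt_three
  have hκ : π / 6 - 1 / π ≤ 1 / π := by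
    have := pi_lt_d2
    rw [sub_le_iff_le_add, ← add_div, div_le_div_iff₀ (by linarith) (by linarith)]
    nlinarith
  have h3 : (a * cos y + b * sin y) ^ 2 ≤ a ^ 2 + b ^ 2 := by
    have := sin_sq_add_cos_sq y
    nlinarith [sq_nonneg (a * sin y - b * cos y)]
  have h4 : (v y - (a * cos y + b * sin y)) ^ 2 ≤ 1 / π * (V - π * (a ^ 2 + b ^ 2)) :=
    h1.trans (mul_le_mul_of_nonneg_right hκ (by linarith))
  have h5 : 1 / π * (V - π * (a ^ 2 + b ^ 2)) = V / π - (a ^ 2 + b ^ 2) := by field_simp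
  have h6 : 2 * (V / π) ≤ V := by
    have : 0 ≤ V := le_trans (by positivity) h2
    rw [← mul_div_assoc, div_le_iff₀ (by linarith)]
    nlinarith
  nlinarith [sq_nonneg (v y - 2 * (a * cos y + b * sin y))]

/-- If a perturbation `v` of the profile `m + x + x cos` has Dirichlet integral at most `π m²` and
the entropy production is small, then the perturbed profile stays away from zero. -/
theorem perturbed_profile_lower_bound {v v' : ℝ → ℝ}
    (hv : ∀ x, HasDerivAt v (v' x) x) (hv' : Continuous v')
    (pv : Function.Periodic v (2 * π)) (h0 : ∫ x in (-π)..π, v x = 0) {a x m : ℝ}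
    (ha : ∫ x in (-π)..π, v x * cos x = π * a) (hx : 0 < x) (hm : 0 < m)
    (hV : ∫ x in (-π)..π, v' x ^ 2 ≤ π * m ^ 2)
    (hP : (∫ x in (-π)..π, v' x ^ 2) + π * x * a ≤ π * x * (m / 10)) (y : ℝ) :
    m / 20 ≤ m + x + x * cos y + v y := by
  obtain ⟨b, hb⟩ : ∃ b, ∫ x in (-π)..π, v x * sin x = π * b :=
    ⟨_, (mul_div_cancel₀ _ pi_ne_zero).symm⟩
  have h1 := sq_sub_firstModes_le hv hv' pv h0 ha hb y
  have h2 := pi_mul_firstCoeffs_sq_le hv hv' pv h0 ha hb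
  set V := ∫ x in (-π)..π, v' x ^ 2
  have hπ := pi_pos
  have hκ : (π / 6 - 1 / π) * (V - π * (a ^ 2 + b ^ 2)) ≤ 0.6561 * m ^ 2 := by
    have h3 : 0 ≤ π / 6 - 1 / π := by
      have := pi_gt_three
      rw [sub_nonneg, div_le_div_iff₀ (by linarith) (by linarith)]
      nlinarith
    have h4 : V - π * (a ^ 2 + b ^ 2) ≤ π * m ^ 2 := by nlinarith [sq_nonneg a, sq_nonneg b]
    refine (mul_le_mul_of_nonneg_left h4 h3).trans ?_
    have h5 : (π / 6 - 1 / π) * (π * m ^ 2) = (π ^ 2 / 6 - 1) * m ^ 2 := by field_simp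
    rw [h5]
    have := pi_lt_d2
    gcongr
    nlinarith
  have hr : -(0.81 * m) ≤ v y - (a * cos y + b * sin y) := by
    have : (v y - (a * cos y + b * sin y)) ^ 2 ≤ (0.81 * m) ^ 2 := by nlinarith
    exact (abs_le_of_sq_le_sq' this (by positivity)).1
  have ham : a ≤ m / 10 := by
    have hV0 : 0 ≤ V := le_trans (by positivity) h2
    have : π * x * a ≤ π * x * (m / 10) := by linarith
    exact le_of_mul_le_mul_left this (by positivity)
  have hab : a ^ 2 + b ^ 2 ≤ x * (m / 10) - x * a := by
    have : π * (a ^ 2 + b ^ 2) ≤ π * (x * (m / 10) - x * a) := by nlinarith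
    exact le_of_mul_le_mul_left this hπ
  have hmode : -(x + m / 10) ≤ (x + a) * cos y + b * sin y := by
    have h3 : ((x + a) * cos y + b * sin y) ^ 2 ≤ (x + a) ^ 2 + b ^ 2 := by
      have := sin_sq_add_cos_sq y
      nlinarith [sq_nonneg ((x + a) * sin y - b * cos y)]
    have : ((x + a) * cos y + b * sin y) ^ 2 ≤ (x + m / 10) ^ 2 := by nlinarith
    exact (abs_le_of_sq_le_sq' this (by positivity)).1
  nlinarith

/-- The derivative of `entropyDensity`, vanishing at `1`. -/
noncomputable def entropyDensityDeriv (n y : ℝ) : ℝ := ∫ z in (1 : ℝ)..y, z ^ (-n)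

/-- The entropy density `G` with `G'' = y⁻ⁿ` and `G(1) = G'(1) = 0`. -/
noncomputable def entropyDensity (n y : ℝ) : ℝ := ∫ z in (1 : ℝ)..y, entropyDensityDeriv n z

theorem hasDerivAt_integral_of_continuousOn_Ioi {f : ℝ → ℝ} (hf : ContinuousOn f (Ioi 0))
    {y : ℝ} (hy : 0 < y) : HasDerivAt (fun y => ∫ z in (1 : ℝ)..y, f z) (f y) y := by
  have hsub : uIcc 1 y ⊆ Ioi 0 := (convex_Ioi 0).ordConnected.uIcc_subset (by simp) hy
  exact intervalIntegral.integral_hasDerivAt_right (hf.mono hsub).intervalIntegrable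
    (hf.stronglyMeasurableAtFilter isOpen_Ioi y hy) (hf.continuousAt (Ioi_mem_nhds hy))

theorem hasDerivAt_entropyDensityDeriv (n : ℝ) {y : ℝ} (hy : 0 < y) :
    HasDerivAt (entropyDensityDeriv n) (y ^ (-n)) y :=
  hasDerivAt_integral_of_continuousOn_Ioi (f := fun z => z ^ (-n))
    (fun z hz => (continuousAt_rpow_const z _ (.inl (ne_of_gt hz))).continuousWithinAt) hy

theorem continuousOn_entropyDensityDeriv (n : ℝ) :
    ContinuousOn (entropyDensityDeriv n) (Ioi 0) :=
  fun _ hz => (hasDerivAt_entropyDensityDeriv n hz).continuousAt.continuousWithinAt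

theorem hasDerivAt_entropyDensity (n : ℝ) {y : ℝ} (hy : 0 < y) :
    HasDerivAt (entropyDensity n) (entropyDensityDeriv n y) y :=
  hasDerivAt_integral_of_continuousOn_Ioi (continuousOn_entropyDensityDeriv n) hy

theorem entropyDensity_nonneg (n : ℝ) {y : ℝ} (hy : 0 < y) : 0 ≤ entropyDensity n y := by
  rcases le_total 1 y with h | h
  · refine intervalIntegral.integral_nonneg h fun s hs => ?_
    exact intervalIntegral.integral_nonneg hs.1 fun z hz =>
      rpow_nonneg (by linarith [hz.1]) _
  · rw [entropyDensity, intervalIntegral.integral_symm, ← intervalIntegral.integral_neg]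
    refine intervalIntegral.integral_nonneg h fun s hs => ?_
    rw [entropyDensityDeriv, ← intervalIntegral.integral_symm]
    exact intervalIntegral.integral_nonneg hs.2 fun z hz =>
      rpow_nonneg (by linarith [hz.1, hs.1]) _

/-- Differentiation under the integral sign for functions on the open half-plane. -/
theorem hasDerivAt_integral_param {f f' : ℝ → ℝ → ℝ}
    (hf : ContinuousOn (fun p : ℝ × ℝ => f p.1 p.2) (Ioi 0 ×ˢ univ))
    (hf' : ContinuousOn (fun p : ℝ × ℝ => f' p.1 p.2) (Ioi 0 ×ˢ univ))
    (hd : ∀ t θ, 0 < t → HasDerivAt (fun s => f s θ) (f' t θ) t) {t : ℝ} (ht : 0 < t) :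
    HasDerivAt (fun s => ∫ θ in (-π)..π, f s θ) (∫ θ in (-π)..π, f' t θ) t := by
  have slice {g : ℝ → ℝ → ℝ} (hg : ContinuousOn (fun p : ℝ × ℝ => g p.1 p.2) (Ioi 0 ×ˢ univ))
      {s : ℝ} (hs : 0 < s) : Continuous (g s) :=
    hg.comp_continuous (f := fun θ => (s, θ)) (by fun_prop) fun θ => ⟨hs, mem_univ _⟩
  have hK : IsCompact (Icc (t / 2) (2 * t) ×ˢ Icc (-π) π) := isCompact_Icc.prod isCompact_Icc
  obtain ⟨C, hC⟩ := hK.exists_bound_of_continuousOn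
    (hf'.mono (prod_mono (fun s hs => lt_of_lt_of_le (half_pos ht) hs.1) (subset_univ _)))
  refine (intervalIntegral.hasDerivAt_integral_of_dominated_loc_of_deriv_le
    (s := Icc (t / 2) (2 * t)) (bound := fun _ => C)
    (Icc_mem_nhds (by linarith) (by linarith)) ?_ ((slice hf ht).intervalIntegrable _ _)
    (slice hf' ht).aestronglyMeasurable ?_ (continuous_const.intervalIntegrable _ _) ?_).2
  · filter_upwards [Ioi_mem_nhds ht] with s hs using (slice hf hs).aestronglyMeasurable
  · refine .of_forall fun θ hθ s hs => hC (s, θ) ⟨hs, ?_⟩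
    rw [uIoc_of_le (by linarith [pi_pos])] at hθ
    exact Ioc_subset_Icc_self hθ
  · exact .of_forall fun θ _ s hs => hd s θ (lt_of_lt_of_le (half_pos ht) hs.1)

theorem continuousOn_integral_param {f : ℝ → ℝ → ℝ}
    (hf : ContinuousOn (fun p : ℝ × ℝ => f p.1 p.2) (Ici 0 ×ˢ univ)) :
    ContinuousOn (fun s => ∫ θ in (-π)..π, f s θ) (Ici 0) := by
  have h : Continuous (Function.uncurry fun s θ => f (max s 0) θ) :=
    hf.comp_continuous (f := fun p : ℝ × ℝ => (max p.1 0, p.2)) (by fun_prop)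
      fun p => ⟨mem_Ici.2 (le_max_right _ _), mem_univ _⟩
  refine (intervalIntegral.continuous_parametric_intervalIntegral_of_continuous' (μ := volume)
    h (-π) π).continuousOn.congr fun s hs => ?_
  simp only [max_eq_left (mem_Ici.1 hs)]

section PartialDerivatives

variable {u : ℝ → ℝ → ℝ}

theorem contDiff_slice
    (hu : ContDiffOn ℝ (⊤ : ℕ∞) (fun p : ℝ × ℝ => u p.1 p.2) (Ici 0 ×ˢ univ)) {t : ℝ}
    (ht : 0 ≤ t) : ContDiff ℝ (⊤ : ℕ∞) (u t) :=
  hu.comp_contDiff (f := fun θ => (t, θ)) (by fun_prop) fun θ => ⟨ht, mem_univ _⟩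

theorem continuousOn_deriv_slice
    (hu : ContDiffOn ℝ (⊤ : ℕ∞) (fun p : ℝ × ℝ => u p.1 p.2) (Ici 0 ×ˢ univ)) :
    ContinuousOn (fun p : ℝ × ℝ => deriv (u p.1) p.2) (Ici 0 ×ˢ univ) := by
  have hd : UniqueDiffOn ℝ (Ici (0 : ℝ) ×ˢ (univ : Set ℝ)) :=
    (uniqueDiffOn_Ici 0).prod uniqueDiffOn_univ
  have hc := hu.continuousOn_fderivWithin hd (by simp)
  refine (hc.clm_apply (continuousOn_const (c := ((0 : ℝ), (1 : ℝ))))).congr fun p hp => ?_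
  have h1 := ((hu.differentiableOn (by simp)) p hp).hasFDerivWithinAt
  have h2 : HasDerivWithinAt (fun θ : ℝ => (p.1, θ)) ((0 : ℝ), (1 : ℝ)) univ p.2 :=
    ((hasDerivAt_const _ _).prodMk (hasDerivAt_id' _)).hasDerivWithinAt
  have h3 := h1.comp_hasDerivWithinAt (x := p.2) (f := fun θ : ℝ => (p.1, θ)) (t := Ici 0 ×ˢ univ)
    h2 (fun θ _ => ⟨hp.1, mem_univ _⟩)
  exact (hasDerivWithinAt_univ.1 h3).deriv

theorem isOpen_Ioi_prod_univ : IsOpen (Ioi (0 : ℝ) ×ˢ (univ : Set ℝ)) :=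
  isOpen_Ioi.prod isOpen_univ

theorem hasDerivAt_left
    (hu : ContDiffOn ℝ (⊤ : ℕ∞) (fun p : ℝ × ℝ => u p.1 p.2) (Ioi 0 ×ˢ univ)) {t : ℝ} (θ : ℝ)
    (ht : 0 < t) :
    HasDerivAt (fun s => u s θ) (fderiv ℝ (fun p : ℝ × ℝ => u p.1 p.2) (t, θ) (1, 0)) t := by
  have h1 := ((hu.contDiffAt (isOpen_Ioi_prod_univ.mem_nhds (x := (t, θ)) ⟨ht, mem_univ _⟩)
    ).differentiableAt (by simp)).hasFDerivAt
  exact h1.comp_hasDerivAt (f := fun s : ℝ => (s, θ)) t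
    ((hasDerivAt_id' t).prodMk (hasDerivAt_const t θ))

theorem hasDerivAt_right
    (hu : ContDiffOn ℝ (⊤ : ℕ∞) (fun p : ℝ × ℝ => u p.1 p.2) (Ioi 0 ×ˢ univ)) {t : ℝ} (θ : ℝ)
    (ht : 0 < t) :
    HasDerivAt (u t) (fderiv ℝ (fun p : ℝ × ℝ => u p.1 p.2) (t, θ) (0, 1)) θ := by
  have h1 := ((hu.contDiffAt (isOpen_Ioi_prod_univ.mem_nhds (x := (t, θ)) ⟨ht, mem_univ _⟩)
    ).differentiableAt (by simp)).hasFDerivAt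
  exact h1.comp_hasDerivAt (f := fun s : ℝ => (t, s)) θ
    ((hasDerivAt_const θ t).prodMk (hasDerivAt_id' θ))

theorem contDiffOn_fderiv_apply
    (hu : ContDiffOn ℝ (⊤ : ℕ∞) (fun p : ℝ × ℝ => u p.1 p.2) (Ioi 0 ×ˢ univ)) (w : ℝ × ℝ) :
    ContDiffOn ℝ (⊤ : ℕ∞) (fun p : ℝ × ℝ => fderiv ℝ (fun p : ℝ × ℝ => u p.1 p.2) p w)
      (Ioi 0 ×ˢ univ) :=
  (hu.fderiv_of_isOpen (m := (⊤ : ℕ∞)) isOpen_Ioi_prod_univ (by simp)).clm_apply contDiffOn_const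

theorem contDiffOn_deriv_left
    (hu : ContDiffOn ℝ (⊤ : ℕ∞) (fun p : ℝ × ℝ => u p.1 p.2) (Ioi 0 ×ˢ univ)) :
    ContDiffOn ℝ (⊤ : ℕ∞) (fun p : ℝ × ℝ => deriv (fun s => u s p.2) p.1) (Ioi 0 ×ˢ univ) :=
  (contDiffOn_fderiv_apply hu (1, 0)).congr fun p hp => (hasDerivAt_left hu p.2 hp.1).deriv

theorem contDiffOn_deriv_right
    (hu : ContDiffOn ℝ (⊤ : ℕ∞) (fun p : ℝ × ℝ => u p.1 p.2) (Ioi 0 ×ˢ univ)) :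
    ContDiffOn ℝ (⊤ : ℕ∞) (fun p : ℝ × ℝ => deriv (u p.1) p.2) (Ioi 0 ×ˢ univ) :=
  (contDiffOn_fderiv_apply hu (0, 1)).congr fun p hp => (hasDerivAt_right hu p.2 hp.1).deriv

/-- The mixed partial derivatives of a smooth function on the open half-plane agree. -/
theorem hasDerivAt_left_deriv_right
    (hu : ContDiffOn ℝ (⊤ : ℕ∞) (fun p : ℝ × ℝ => u p.1 p.2) (Ioi 0 ×ˢ univ)) {t : ℝ} (θ : ℝ)
    (ht : 0 < t) :
    HasDerivAt (fun s => deriv (u s) θ) (deriv (fun x => deriv (fun s => u s x) t) θ) t := by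
  set U := fun p : ℝ × ℝ => u p.1 p.2 with hU
  have hmem : Ioi (0 : ℝ) ×ˢ (univ : Set ℝ) ∈ nhds (t, θ) :=
    isOpen_Ioi_prod_univ.mem_nhds ⟨ht, mem_univ _⟩
  have hs : IsSymmSndFDerivAt ℝ U (t, θ) :=
    (hu.contDiffAt hmem).isSymmSndFDerivAt (by
      rw [minSmoothness_of_isRCLikeNormedField]; exact WithTop.coe_le_coe.2 (le_top : (2 : ℕ∞) ≤ ⊤))
  have hdiff : DifferentiableAt ℝ (fderiv ℝ U) (t, θ) :=
    ((hu.fderiv_of_isOpen (m := (⊤ : ℕ∞)) isOpen_Ioi_prod_univ (by simp)).contDiffAt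
      hmem).differentiableAt (by simp)
  have hap (w z : ℝ × ℝ) : fderiv ℝ (fun p => fderiv ℝ U p w) (t, θ) z =
      fderiv ℝ (fderiv ℝ U) (t, θ) z w := by
    rw [(hdiff.hasFDerivAt.clm_apply (hasFDerivAt_const w _)).fderiv]
    simp
  have h1 := hasDerivAt_left (u := fun s x => fderiv ℝ U (s, x) (0, 1))
    (contDiffOn_fderiv_apply hu (0, 1)) θ ht
  have h2 := hasDerivAt_right (u := fun s x => fderiv ℝ U (s, x) (1, 0))
    (contDiffOn_fderiv_apply hu (1, 0)) θ ht
  have e2 : (fun x => deriv (fun s => u s x) t) = fun x => fderiv ℝ U (t, x) (1, 0) :=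
    funext fun x => (hasDerivAt_left hu x ht).deriv
  rw [e2, h2.deriv]
  simp only [Prod.mk.eta, hap] at h1 ⊢
  rw [hs.eq] at h1
  refine h1.congr_of_eventuallyEq ?_
  filter_upwards [Ioi_mem_nhds ht] with s hs using (hasDerivAt_right hu θ hs).deriv

end PartialDerivatives

section Decay

theorem one_sub_mul_le_rpow {n s : ℝ} (hn : 0 < n) (hs0 : 0 ≤ s) (hs1 : s < 1) :
    1 - (n + 1) * s ≤ (1 - s) ^ n := by
  rcases le_total 1 n with h | h
  · have := one_add_mul_self_le_rpow_one_add (s := -s) (by linarith) h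
    rw [← sub_eq_add_neg] at this
    linarith
  · have := rpow_le_rpow_of_exponent_ge (x := 1 - s) (by linarith) (by linarith) h
    rw [rpow_one] at this
    nlinarith

theorem exists_deriv_gt_of_nonneg {Y Y' : ℝ → ℝ} (hY : ∀ t, 0 < t → 0 ≤ Y t)
    (hd : ∀ t, 0 < t → HasDerivAt Y (Y' t) t) {κ : ℝ} (hκ : 0 < κ) :
    ∃ t, 0 < t ∧ -κ < Y' t := by
  by_contra! h
  have hanti : AntitoneOn (fun t => Y t + κ * t) (Ici 1) := by
    have hd' : ∀ t, 0 < t → HasDerivAt (fun t => Y t + κ * t) (Y' t + κ) t := fun t ht => by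
      simpa using (hd t ht).fun_add ((hasDerivAt_id' t).const_mul κ)
    refine antitoneOn_of_deriv_nonpos (convex_Ici 1) ?_ ?_ ?_
    · exact fun t ht => (hd' t (lt_of_lt_of_le one_pos ht)).continuousAt.continuousWithinAt
    · rw [interior_Ici]
      exact fun t ht => (hd' t (one_pos.trans ht)).differentiableAt.differentiableWithinAt
    · rw [interior_Ici]
      intro t ht
      rw [(hd' t (one_pos.trans ht)).deriv]
      linarith [h t (one_pos.trans ht)]
  have hY1 := hY 1 one_pos
  have hle : (1 : ℝ) ≤ 2 + Y 1 / κ := by have := div_nonneg hY1 hκ.le; linarith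
  have h1 := hanti (mem_Ici.2 le_rfl) (mem_Ici.2 hle) hle
  have h2 := hY _ (lt_of_lt_of_le one_pos hle)
  have h3 : κ * (2 + Y 1 / κ) = 2 * κ + Y 1 := by field_simp
  simp only [h3] at h1
  linarith

/-- Multiplying by an integrating factor: if `Q' ≤ -φ' Q`, then `Q exp φ` is nonincreasing. -/
theorem antitoneOn_mul_exp {Q Q' φ φ' : ℝ → ℝ} {T : ℝ}
    (hd : ∀ t, T ≤ t → HasDerivAt Q (Q' t) t) (hφ : ∀ t, HasDerivAt φ (φ' t) t)
    (hle : ∀ t, T ≤ t → Q' t ≤ -φ' t * Q t) :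
    AntitoneOn (fun t => Q t * exp (φ t)) (Ici T) := by
  have hd' : ∀ t, T ≤ t → HasDerivAt (fun t => Q t * exp (φ t))
      (Q' t * exp (φ t) + Q t * (exp (φ t) * φ' t)) t := fun t ht => (hd t ht).mul (hφ t).exp
  refine antitoneOn_of_deriv_nonpos (convex_Ici T) ?_ ?_ ?_
  · exact fun t ht => (hd' t ht).continuousAt.continuousWithinAt
  · rw [interior_Ici]
    exact fun t ht => (hd' t ht.le).differentiableAt.differentiableWithinAt
  · rw [interior_Ici]
    intro t ht
    rw [(hd' t ht.le).deriv]
    have h := mul_le_mul_of_nonneg_right (hle t ht.le) (exp_pos (φ t)).le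
    linarith

theorem antitoneOn_of_hasDerivAt_nonpos {Q Q' : ℝ → ℝ} (hc : ContinuousOn Q (Ici 0))
    (hd : ∀ t, 0 < t → HasDerivAt Q (Q' t) t) (hle : ∀ t, 0 < t → Q' t ≤ 0) :
    AntitoneOn Q (Ici 0) := by
  refine antitoneOn_of_deriv_nonpos (convex_Ici 0) hc ?_ ?_
  · rw [interior_Ici]
    exact fun t ht => (hd t ht).differentiableAt.differentiableWithinAt
  · rw [interior_Ici]
    intro t ht
    rw [(hd t ht).deriv]
    exact hle t ht

/-- A nonincreasing quantity whose dissipation rate tends to `β mⁿ` as the quantity tends to zero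
decays exponentially with the limiting rate. -/
theorem exists_exp_decay {Q D : ℝ → ℝ} {n m x β T : ℝ} (hn : 0 < n) (hm : 0 < m) (hx : 0 < x)
    (hβ : 0 < β) (hc : ContinuousOn Q (Ici 0)) (hQ : ∀ t, 0 ≤ t → 0 ≤ Q t)
    (hd : ∀ t, 0 < t → HasDerivAt Q (-2 * D t) t) (hD : ∀ t, 0 < t → 0 ≤ D t)
    (hDQ : ∀ t, 0 < t → sqrt (x * Q t) ≤ m → β * (m - sqrt (x * Q t)) ^ n * Q t ≤ D t)
    (hT : 0 < T) (hQT : x * Q T ≤ (m / 2) ^ 2) :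
    ∃ K, 0 ≤ K ∧ ∀ t, 0 ≤ t → Q t ≤ K * exp (-2 * (β * m ^ n) * t) := by
  have hanti : AntitoneOn Q (Ici 0) :=
    antitoneOn_of_hasDerivAt_nonpos hc hd fun t ht => by linarith [hD t ht]
  have hsqrt : ∀ t, T ≤ t → sqrt (x * Q t) ≤ m / 2 := by
    intro t ht
    rw [sqrt_le_left (by positivity)]
    have := hanti (mem_Ici.2 hT.le) (mem_Ici.2 (hT.le.trans ht)) ht
    nlinarith
  set c := β * (m / 2) ^ n with hcdef
  set μ := β * m ^ n with hμ
  have hcpos : 0 < c := by positivity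
  have hμpos : 0 < μ := by positivity
  have h1 : AntitoneOn (fun t => Q t * exp (2 * c * t)) (Ici T) := by
    refine antitoneOn_mul_exp (φ' := fun _ => 2 * c) (fun t ht => hd t (hT.trans_le ht))
      (fun t => by simpa using (hasDerivAt_id' t).const_mul (2 * c)) fun t ht => ?_
    have ht0 := hT.trans_le ht
    have h := hDQ t ht0 ((hsqrt t ht).trans (by linarith))
    have hp : (m / 2) ^ n ≤ (m - sqrt (x * Q t)) ^ n :=
      rpow_le_rpow (by positivity) (by linarith [hsqrt t ht]) hn.le
    have : c * Q t ≤ β * (m - sqrt (x * Q t)) ^ n * Q t :=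
      mul_le_mul_of_nonneg_right (mul_le_mul_of_nonneg_left hp hβ.le) (hQ t ht0.le)
    linarith
  set A := sqrt (x * (Q T * exp (2 * c * T))) with hA
  have hdec : ∀ t, T ≤ t → sqrt (x * Q t) ≤ A * exp (-c * t) := by
    intro t ht
    have h := h1 (mem_Ici.2 le_rfl) (mem_Ici.2 ht) ht
    have e : exp (-c * t) = sqrt (exp (-(2 * c * t))) := by
      rw [← exp_half]; ring_nf
    rw [e, hA, ← sqrt_mul' _ (exp_pos _).le]
    refine sqrt_le_sqrt ?_
    rw [mul_assoc]
    refine mul_le_mul_of_nonneg_left ?_ hx.le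
    rw [exp_neg, ← div_eq_mul_inv, le_div_iff₀ (exp_pos _)]
    exact h
  set B := 2 * μ * ((n + 1) / m) * A with hB
  have h2 : AntitoneOn (fun t => Q t * exp (2 * μ * t + B / c * exp (-c * t))) (Ici T) := by
    refine antitoneOn_mul_exp (φ' := fun t => 2 * μ - B * exp (-c * t))
      (fun t ht => hd t (hT.trans_le ht)) (fun t => ?_) fun t ht => ?_
    · have e1 : HasDerivAt (fun t => exp (-c * t)) (exp (-c * t) * (-c)) t := by
        simpa using ((hasDerivAt_id' t).const_mul (-c)).exp
      convert! ((hasDerivAt_id' t).const_mul (2 * μ)).add (e1.const_mul (B / c)) using 1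
      field_simp
      ring
    · have ht0 := hT.trans_le ht
      have hs := hsqrt t ht
      have h := hDQ t ht0 (hs.trans (by linarith))
      set y := sqrt (x * Q t) with hy
      have hy0 : 0 ≤ y := sqrt_nonneg _
      have hb := one_sub_mul_le_rpow hn (div_nonneg hy0 hm.le)
        (show y / m < 1 by rw [div_lt_one hm]; linarith)
      have hp : m ^ n * (1 - (n + 1) * (y / m)) ≤ (m - y) ^ n := by
        have e : m - y = m * (1 - y / m) := by field_simp
        rw [e, mul_rpow hm.le (by rw [sub_nonneg, div_le_one hm]; linarith)]
        exact mul_le_mul_of_nonneg_left hb (by positivity)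
      have hQt := hQ t ht0.le
      have h3 : β * (m ^ n * (1 - (n + 1) * (y / m))) * Q t ≤ D t :=
        le_trans (mul_le_mul_of_nonneg_right (mul_le_mul_of_nonneg_left hp hβ.le) hQt) h
      have h4 : 2 * μ * ((n + 1) / m) * y ≤ B * exp (-c * t) := by
        rw [hB, mul_assoc _ A]
        exact mul_le_mul_of_nonneg_left (hdec t ht) (by positivity)
      have h5 := mul_le_mul_of_nonneg_right h4 hQt
      have h6 : β * (m ^ n * (1 - (n + 1) * (y / m))) * Q t
          = μ * Q t - μ * ((n + 1) / m) * y * Q t := by rw [hμ]; ring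
      linarith
  have hA0 : 0 ≤ A := sqrt_nonneg _
  have hB0 : 0 ≤ B := by positivity
  refine ⟨max (Q 0 * exp (2 * μ * T)) (Q T * exp (2 * μ * T + B / c * exp (-c * T))), ?_, ?_⟩
  · exact le_max_of_le_left (mul_nonneg (hQ 0 le_rfl) (exp_pos _).le)
  · intro t ht
    rw [show -2 * μ * t = -(2 * μ * t) by ring, exp_neg, ← div_eq_mul_inv,
      le_div_iff₀ (exp_pos _)]
    rcases le_total t T with h | h
    · refine le_max_of_le_left ?_
      have hQ0 := hQ 0 le_rfl
      have := hanti (mem_Ici.2 le_rfl) (mem_Ici.2 ht) ht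
      gcongr
    · refine le_max_of_le_right (le_trans ?_ (h2 (mem_Ici.2 le_rfl) (mem_Ici.2 h) h))
      refine mul_le_mul_of_nonneg_left (exp_le_exp.2 ?_) (hQ t ht)
      have : 0 ≤ B / c * exp (-c * t) := by positivity
      linarith

end Decay

/-- The flux `fⁿ(∂³f + α²∂f − sin)` of the thin-film equation. -/
noncomputable def flux (n α : ℝ) (f : ℝ → ℝ) (x : ℝ) : ℝ :=
  f x ^ n * (deriv (deriv (deriv f)) x + α ^ 2 * deriv f x - sin x)

section Profile

variable {f : ℝ → ℝ} {n α c x : ℝ}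

theorem ContDiff.deriv_top (hf : ContDiff ℝ (⊤ : ℕ∞) f) : ContDiff ℝ (⊤ : ℕ∞) (deriv f) :=
  (contDiff_infty_iff_deriv.1 hf).2

theorem ContDiff.hasDerivAt_top (hf : ContDiff ℝ (⊤ : ℕ∞) f) (y : ℝ) :
    HasDerivAt f (deriv f y) y :=
  ((contDiff_infty_iff_deriv.1 hf).1 y).hasDerivAt

theorem contDiff_flux (hf : ContDiff ℝ (⊤ : ℕ∞) f) (hpos : ∀ y, 0 < f y) :
    ContDiff ℝ (⊤ : ℕ∞) (flux n α f) :=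
  (hf.rpow_const_of_ne fun y => (hpos y).ne').mul
    ((hf.deriv_top.deriv_top.deriv_top.add (contDiff_const.mul hf.deriv_top)).sub contDiff_sin)

theorem periodic_deriv (hf : ContDiff ℝ (⊤ : ℕ∞) f) (pf : Function.Periodic f (2 * π)) :
    Function.Periodic (deriv f) (2 * π) :=
  periodic_of_hasDerivAt hf.hasDerivAt_top pf

theorem periodic_flux (hf : ContDiff ℝ (⊤ : ℕ∞) f) (pf : Function.Periodic f (2 * π)) :
    Function.Periodic (flux n α f) (2 * π) := by
  have p1 := periodic_deriv hf pf
  have p3 := periodic_deriv hf.deriv_top.deriv_top (periodic_deriv hf.deriv_top p1)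
  intro y
  simp only [flux, pf y, p1 y, p3 y, sin_periodic y]

theorem hasDerivAt_perturbation (hf : ContDiff ℝ (⊤ : ℕ∞) f) (y : ℝ) :
    HasDerivAt (fun y => f y - (c + x * cos y)) (deriv f y + x * sin y) y := by
  convert! (hf.hasDerivAt_top y).fun_sub (((hasDerivAt_cos y).const_mul x).const_add c) using 1
  ring

theorem hasDerivAt_perturbation_deriv (hf : ContDiff ℝ (⊤ : ℕ∞) f) (y : ℝ) :
    HasDerivAt (fun y => deriv f y + x * sin y) (deriv (deriv f) y + x * cos y) y :=
  (hf.deriv_top.hasDerivAt_top y).fun_add ((hasDerivAt_sin y).const_mul x)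

theorem hasDerivAt_perturbation_deriv_deriv (hf : ContDiff ℝ (⊤ : ℕ∞) f) (y : ℝ) :
    HasDerivAt (fun y => deriv (deriv f) y + x * cos y)
      (deriv (deriv (deriv f)) y - x * sin y) y := by
  convert! (hf.deriv_top.deriv_top.hasDerivAt_top y).fun_add
    ((hasDerivAt_cos y).const_mul x) using 1
  ring

theorem periodic_perturbation (pf : Function.Periodic f (2 * π)) :
    Function.Periodic (fun y => f y - (c + x * cos y)) (2 * π) := fun y => by
  simp only [pf y, cos_periodic y]

theorem integral_perturbation_deriv_mul_sin (hf : ContDiff ℝ (⊤ : ℕ∞) f)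
    (pf : Function.Periodic f (2 * π)) :
    ∫ y in (-π)..π, (deriv f y + x * sin y) * sin y =
      -∫ y in (-π)..π, (f y - (c + x * cos y)) * cos y := by
  have h := integral_mul_deriv_of_periodic (hasDerivAt_perturbation (c := c) (x := x) hf)
    hasDerivAt_sin (hf.deriv_top.continuous.add (by fun_prop)) continuous_cos
    (periodic_perturbation pf) sin_periodic
  linarith

/-- The energy of a profile relative to the minimizer is a quadratic form in the perturbation. -/
theorem energy_eq_add_quadraticForm (hf : ContDiff ℝ (⊤ : ℕ∞) f)
    (pf : Function.Periodic f (2 * π)) (hx : x * (1 - α ^ 2) = 1)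
    (h0 : ∫ y in (-π)..π, (f y - (c + x * cos y)) = 0) :
    energy α f = energy α (fun y => c + x * cos y) +
      (1 / 2) * ∫ y in (-π)..π,
        ((deriv f y + x * sin y) ^ 2 - α ^ 2 * (f y - (c + x * cos y)) ^ 2) := by
  have cf := hf.continuous
  have cf' := hf.deriv_top.continuous
  have hd : deriv (fun y => c + x * cos y) = fun y => -(x * sin y) := funext fun y => by
    rw [(((hasDerivAt_cos y).const_mul x).const_add c).deriv]; ring
  have i1 := integral_perturbation_deriv_mul_sin (x := x) (c := c) hf pf
  rw [energy, energy, hd]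
  set v := fun y => f y - (c + x * cos y) with hv
  have cv : Continuous v := by fun_prop
  set v' := fun y => deriv f y + x * sin y with hv'
  have cv' : Continuous v' := by fun_prop
  have e1 : ∀ y, deriv f y ^ 2 - α ^ 2 * f y ^ 2 =
      ((-(x * sin y)) ^ 2 - α ^ 2 * (c + x * cos y) ^ 2) + (v' y ^ 2 - α ^ 2 * v y ^ 2)
      - 2 * x * (v' y * sin y) - 2 * α ^ 2 * c * v y - 2 * α ^ 2 * x * (v y * cos y) := by
    intro y; simp only [hv, hv']; ring
  have e2 : ∀ y, f y * cos y = (c + x * cos y) * cos y + v y * cos y := by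
    intro y; simp only [hv]; ring
  simp_rw [e1, e2]
  rw [intervalIntegral.integral_sub, intervalIntegral.integral_sub, intervalIntegral.integral_sub,
    intervalIntegral.integral_add, intervalIntegral.integral_add]
  · simp only [intervalIntegral.integral_const_mul]
    rw [h0, i1]
    linear_combination (∫ y in (-π)..π, v y * cos y) * hx
  all_goals exact Continuous.intervalIntegrable (by fun_prop) _ _

/-- Energy dissipation identity, at a fixed time. -/
theorem integral_energy_variation_flux (hf : ContDiff ℝ (⊤ : ℕ∞) f) (hpos : ∀ y, 0 < f y)
    (pf : Function.Periodic f (2 * π)) (hx : x * (1 - α ^ 2) = 1) :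
    ∫ y in (-π)..π, ((deriv f y + x * sin y) * deriv (deriv (flux n α f)) y
        - α ^ 2 * (f y - (c + x * cos y)) * deriv (flux n α f) y) =
      ∫ y in (-π)..π, f y ^ n * (deriv (deriv (deriv f)) y - x * sin y
        + α ^ 2 * (deriv f y + x * sin y)) ^ 2 := by
  have cf := hf.continuous
  have cf' := hf.deriv_top.continuous
  have cf'' := hf.deriv_top.deriv_top.continuous
  have cf₃ := hf.deriv_top.deriv_top.deriv_top.continuous
  have hq := contDiff_flux (n := n) (α := α) hf hpos
  have pq := periodic_flux (n := n) (α := α) hf pf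
  have cq := hq.continuous
  have cq' := hq.deriv_top.continuous
  have cq'' := hq.deriv_top.deriv_top.continuous
  have pv := periodic_perturbation (c := c) (x := x) pf
  have d0 := hasDerivAt_perturbation (c := c) (x := x) hf
  have d1 := hasDerivAt_perturbation_deriv (x := x) hf
  have d2 := hasDerivAt_perturbation_deriv_deriv (x := x) hf
  have p1 := periodic_of_hasDerivAt d0 pv
  have p2 := periodic_of_hasDerivAt d1 p1
  have i1 := integral_mul_deriv_of_periodic d1 hq.deriv_top.hasDerivAt_top (by fun_prop) cq'' p1
    (periodic_deriv hq pq)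
  have i2 := integral_mul_deriv_of_periodic
    (fun y => (d2 y).fun_add ((d0 y).const_mul (α ^ 2))) hq.hasDerivAt_top
    (by fun_prop) cq' (fun y => by simp only [p2 y, pv y]) pq
  have e1 : ∫ y in (-π)..π, ((deriv f y + x * sin y) * deriv (deriv (flux n α f)) y
        - α ^ 2 * (f y - (c + x * cos y)) * deriv (flux n α f) y) =
      -∫ y in (-π)..π, (deriv (deriv f) y + x * cos y
        + α ^ 2 * (f y - (c + x * cos y))) * deriv (flux n α f) y := by
    rw [intervalIntegral.integral_sub, i1, ← intervalIntegral.integral_neg,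
      ← intervalIntegral.integral_neg, ← intervalIntegral.integral_sub]
    · congr 1; ext y; ring
    all_goals exact Continuous.intervalIntegrable (by fun_prop) _ _
  rw [e1, i2, neg_neg]
  congr 1
  ext y
  have : deriv (deriv (deriv f)) y + α ^ 2 * deriv f y - sin y =
      deriv (deriv (deriv f)) y - x * sin y + α ^ 2 * (deriv f y + x * sin y) := by
    linear_combination sin y * hx
  rw [flux, this]
  ring

/-- Entropy production identity, at a fixed time. -/
theorem integral_entropy_variation_flux (hf : ContDiff ℝ (⊤ : ℕ∞) f) (hpos : ∀ y, 0 < f y)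
    (pf : Function.Periodic f (2 * π)) (hx : x * (1 - α ^ 2) = 1) :
    ∫ y in (-π)..π, entropyDensityDeriv n (f y) * deriv (flux n α f) y =
      (∫ y in (-π)..π, ((deriv (deriv f) y + x * cos y) ^ 2
        - α ^ 2 * (deriv f y + x * sin y) ^ 2)) +
      ∫ y in (-π)..π, (f y - (c + x * cos y)) * cos y := by
  have cf := hf.continuous
  have cf' := hf.deriv_top.continuous
  have cf'' := hf.deriv_top.deriv_top.continuous
  have cf₃ := hf.deriv_top.deriv_top.deriv_top.continuous
  have hq := contDiff_flux (n := n) (α := α) hf hpos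
  have pq := periodic_flux (n := n) (α := α) hf pf
  have hG : ∀ y, HasDerivAt (fun y => entropyDensityDeriv n (f y)) (f y ^ (-n) * deriv f y) y :=
    fun y => (hasDerivAt_entropyDensityDeriv n (hpos y)).comp y (hf.hasDerivAt_top y)
  have cG : Continuous fun y => f y ^ (-n) * deriv f y :=
    (cf.rpow_const fun y => .inl (hpos y).ne').mul cf'
  have i0 := integral_mul_deriv_of_periodic hG hq.hasDerivAt_top cG hq.deriv_top.continuous
    (fun y => by simp only [pf y]) pq
  have pv := periodic_perturbation (c := c) (x := x) pf
  have d0 := hasDerivAt_perturbation (c := c) (x := x) hf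
  have d1 := hasDerivAt_perturbation_deriv (x := x) hf
  have d2 := hasDerivAt_perturbation_deriv_deriv (x := x) hf
  have p1 := periodic_of_hasDerivAt d0 pv
  have p2 := periodic_of_hasDerivAt d1 p1
  have i1 := integral_perturbation_deriv_mul_sin (x := x) (c := c) hf pf
  have i2 := integral_mul_deriv_of_periodic d1 d2 (by fun_prop) (by fun_prop) p1 p2
  have i3 := integral_mul_deriv_of_periodic hasDerivAt_sin d2 continuous_cos (by fun_prop)
    sin_periodic p2
  have i4 := integral_mul_deriv_of_periodic hasDerivAt_cos d1 (by fun_prop) (by fun_prop)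
    cos_periodic p1
  rw [i0]
  set v := fun y => f y - (c + x * cos y) with hv
  have cv : Continuous v := by fun_prop
  set v₁ := fun y => deriv f y + x * sin y with hv₁
  have cv₁ : Continuous v₁ := by fun_prop
  set v₂ := fun y => deriv (deriv f) y + x * cos y with hv₂
  have cv₂ : Continuous v₂ := by fun_prop
  set v₃ := fun y => deriv (deriv (deriv f)) y - x * sin y with hv₃
  have cv₃ : Continuous v₃ := by fun_prop
  have e0 : ∀ y, f y ^ (-n) * deriv f y * flux n α f y = v₁ y * v₃ y + α ^ 2 * v₁ y ^ 2
      - x * (sin y * v₃ y) - α ^ 2 * x * (v₁ y * sin y) := by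
    intro y
    have h1 : f y ^ (-n) * f y ^ n = 1 := by
      rw [← rpow_add (hpos y), neg_add_cancel, rpow_zero]
    have h2 : deriv (deriv (deriv f)) y + α ^ 2 * deriv f y - sin y = v₃ y + α ^ 2 * v₁ y := by
      simp only [hv₃, hv₁]
      linear_combination sin y * hx
    have h3 : deriv f y = v₁ y - x * sin y := by simp [hv₁]
    rw [flux, h2, h3]
    linear_combination (v₁ y - x * sin y) * (v₃ y + α ^ 2 * v₁ y) * h1
  simp only [← sq] at i2
  have i4' : ∫ y in (-π)..π, cos y * v₂ y = ∫ y in (-π)..π, v₁ y * sin y := by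
    rw [i4, ← intervalIntegral.integral_neg]
    congr 1; ext y; ring
  simp_rw [e0]
  rw [intervalIntegral.integral_sub, intervalIntegral.integral_sub, intervalIntegral.integral_add,
    intervalIntegral.integral_sub]
  · simp only [intervalIntegral.integral_const_mul]
    rw [i2, i3, i4', i1]
    linear_combination (∫ y in (-π)..π, v y * cos y) * hx
  all_goals exact Continuous.intervalIntegrable (by fun_prop) _ _

end Profile

/-- Twice the energy of `f` relative to the profile `c + x cos`. -/
noncomputable def relativeEnergy (α c x : ℝ) (f : ℝ → ℝ) : ℝ :=
  ∫ y in (-π)..π, ((deriv f y + x * sin y) ^ 2 - α ^ 2 * (f y - (c + x * cos y)) ^ 2)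

/-- The energy dissipation rate at `f`. -/
noncomputable def dissipation (n α x : ℝ) (f : ℝ → ℝ) : ℝ :=
  ∫ y in (-π)..π, f y ^ n * (deriv (deriv (deriv f)) y - x * sin y
    + α ^ 2 * (deriv f y + x * sin y)) ^ 2

/-- The entropy dissipation rate at `f`. -/
noncomputable def entropyProduction (α c x : ℝ) (f : ℝ → ℝ) : ℝ :=
  (∫ y in (-π)..π, ((deriv (deriv f) y + x * cos y) ^ 2 - α ^ 2 * (deriv f y + x * sin y) ^ 2)) +
    ∫ y in (-π)..π, (f y - (c + x * cos y)) * cos y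

section Estimates

variable {f : ℝ → ℝ} {n α c x m : ℝ}

theorem dirichlet_le_relativeEnergy (hf : ContDiff ℝ (⊤ : ℕ∞) f)
    (pf : Function.Periodic f (2 * π)) (hα : α ^ 2 < 1) (hx : x * (1 - α ^ 2) = 1)
    (h0 : ∫ y in (-π)..π, (f y - (c + x * cos y)) = 0) :
    ∫ y in (-π)..π, (deriv f y + x * sin y) ^ 2 ≤ x * relativeEnergy α c x f := by
  have cf' := hf.deriv_top.continuous
  have h := dirichlet_le_quadraticForm α (hasDerivAt_perturbation hf) (by fun_prop)
    (periodic_perturbation pf) h0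
  have hx0 : 0 < x := pos_of_mul_pos_left (hx ▸ one_pos) (by linarith)
  have := mul_le_mul_of_nonneg_left h hx0.le
  rwa [← mul_assoc, hx, one_mul] at this

theorem relativeEnergy_nonneg (hf : ContDiff ℝ (⊤ : ℕ∞) f)
    (pf : Function.Periodic f (2 * π)) (hα : α ^ 2 < 1)
    (h0 : ∫ y in (-π)..π, (f y - (c + x * cos y)) = 0) : 0 ≤ relativeEnergy α c x f := by
  have cf' := hf.deriv_top.continuous
  refine le_trans (mul_nonneg (by linarith) ?_) (dirichlet_le_quadraticForm α
    (hasDerivAt_perturbation hf) (by fun_prop) (periodic_perturbation pf) h0)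
  exact intervalIntegral.integral_nonneg (by linarith [pi_pos]) fun y _ => sq_nonneg _

theorem dissipation_nonneg (hpos : ∀ y, 0 < f y) : 0 ≤ dissipation n α x f :=
  intervalIntegral.integral_nonneg (by linarith [pi_pos]) fun y _ =>
    mul_nonneg (rpow_nonneg (hpos y).le n) (sq_nonneg _)

/-- A lower bound on the profile makes the dissipation control the relative energy. -/
theorem relativeEnergy_le_dissipation (hf : ContDiff ℝ (⊤ : ℕ∞) f)
    (pf : Function.Periodic f (2 * π)) (hα : α ^ 2 < 1) (hn : 0 < n) (hpos : ∀ y, 0 < f y)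
    (h0 : ∫ y in (-π)..π, (f y - (c + x * cos y)) = 0) {k : ℝ} (hk : 0 ≤ k)
    (hle : ∀ y, k ≤ f y) :
    (1 - α ^ 2) * k ^ n * relativeEnergy α c x f ≤ dissipation n α x f := by
  have cf := hf.continuous
  have cf' := hf.deriv_top.continuous
  have cf₃ := hf.deriv_top.deriv_top.deriv_top.continuous
  have h := quadraticForm_le_dissipation hα (hasDerivAt_perturbation hf)
    (hasDerivAt_perturbation_deriv hf) (hasDerivAt_perturbation_deriv_deriv hf)
    (by fun_prop) (periodic_perturbation pf) h0
  have h1 := mul_le_mul_of_nonneg_left h (rpow_nonneg hk n)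
  have cn : Continuous fun y => f y ^ n := cf.rpow_const fun y => Or.inl (hpos y).ne'
  calc (1 - α ^ 2) * k ^ n * relativeEnergy α c x f
      = k ^ n * ((1 - α ^ 2) * relativeEnergy α c x f) := by ring
    _ ≤ _ := h1
    _ ≤ dissipation n α x f := by
      rw [← intervalIntegral.integral_const_mul]
      refine intervalIntegral.integral_mono_on (by linarith [pi_pos])
        (Continuous.intervalIntegrable (by fun_prop) _ _)
        (Continuous.intervalIntegrable (by fun_prop) _ _) fun y _ => ?_
      exact mul_le_mul_of_nonneg_right (rpow_le_rpow hk (hle y) hn.le) (sq_nonneg _)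

/-- Profiles close in energy to the minimizer are bounded below. -/
theorem sub_sqrt_le_of_relativeEnergy (hf : ContDiff ℝ (⊤ : ℕ∞) f)
    (pf : Function.Periodic f (2 * π)) (hα : α ^ 2 < 1) (hx : x * (1 - α ^ 2) = 1)
    (h0 : ∫ y in (-π)..π, (f y - (c + x * cos y)) = 0) (y : ℝ) :
    c - x - sqrt (x * relativeEnergy α c x f) ≤ f y := by
  have cf' := hf.deriv_top.continuous
  have hx0 : 0 < x := pos_of_mul_pos_left (hx ▸ one_pos) (by linarith)
  have h := (sq_le_dirichlet (hasDerivAt_perturbation hf) (by fun_prop)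
    (periodic_perturbation pf) h0 y).trans (dirichlet_le_relativeEnergy hf pf hα hx h0)
  have h1 := (abs_le.1 (abs_le_sqrt h)).1
  nlinarith [neg_one_le_cos y]

theorem dirichlet_add_firstCoeff_le_entropyProduction (hf : ContDiff ℝ (⊤ : ℕ∞) f)
    (pf : Function.Periodic f (2 * π)) (hα : α ^ 2 < 1) (hx : x * (1 - α ^ 2) = 1) :
    (∫ y in (-π)..π, (deriv f y + x * sin y) ^ 2) +
      x * (∫ y in (-π)..π, (f y - (c + x * cos y)) * cos y) ≤
        x * entropyProduction α c x f := by
  have cf' := hf.deriv_top.continuous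
  have cf'' := hf.deriv_top.deriv_top.continuous
  have hx0 : 0 < x := pos_of_mul_pos_left (hx ▸ one_pos) (by linarith)
  have d0 := hasDerivAt_perturbation (c := c) (x := x) hf
  have d1 := hasDerivAt_perturbation_deriv (x := x) hf
  have p0 := periodic_perturbation (c := c) (x := x) pf
  have p1 := periodic_of_hasDerivAt d0 p0
  have h0 := integral_deriv_of_periodic d0 (by fun_prop) p0
  have h1 := dirichlet_le_quadraticForm α d1 (by fun_prop) p1 h0
  have h2 := integral_sq_le_integral_deriv_sq d1 (by fun_prop) p1 h0
  have h3 := mul_le_mul_of_nonneg_left h1 hx0.le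
  rw [← mul_assoc, hx, one_mul] at h3
  rw [entropyProduction, mul_add]
  linarith

theorem neg_le_firstCoeff (hf : ContDiff ℝ (⊤ : ℕ∞) f)
    (pf : Function.Periodic f (2 * π)) (hm : 0 < m)
    (h0 : ∫ y in (-π)..π, (f y - (c + x * cos y)) = 0)
    (hV : ∫ y in (-π)..π, (deriv f y + x * sin y) ^ 2 ≤ π * m ^ 2) :
    -(π * m) ≤ ∫ y in (-π)..π, (f y - (c + x * cos y)) * cos y := by
  have cf' := hf.deriv_top.continuous
  set a := (∫ y in (-π)..π, (f y - (c + x * cos y)) * cos y) / π with ha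
  set b := (∫ y in (-π)..π, (f y - (c + x * cos y)) * sin y) / π with hb
  have ha' : ∫ y in (-π)..π, (f y - (c + x * cos y)) * cos y = π * a := by
    rw [ha, mul_div_cancel₀ _ pi_ne_zero]
  have hb' : ∫ y in (-π)..π, (f y - (c + x * cos y)) * sin y = π * b := by
    rw [hb, mul_div_cancel₀ _ pi_ne_zero]
  have h := (pi_mul_firstCoeffs_sq_le (hasDerivAt_perturbation hf) (by fun_prop)
    (periodic_perturbation pf) h0 ha' hb').trans hV
  have h1 : a ^ 2 ≤ m ^ 2 := by
    have := le_of_mul_le_mul_left h pi_pos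
    linarith [sq_nonneg b]
  have h2 := (abs_le_of_sq_le_sq' h1 hm.le).1
  rw [ha']
  nlinarith [pi_pos]

theorem neg_le_entropyProduction (hf : ContDiff ℝ (⊤ : ℕ∞) f)
    (pf : Function.Periodic f (2 * π)) (hα : α ^ 2 < 1) (hx : x * (1 - α ^ 2) = 1) (hm : 0 < m)
    (h0 : ∫ y in (-π)..π, (f y - (c + x * cos y)) = 0)
    (hV : ∫ y in (-π)..π, (deriv f y + x * sin y) ^ 2 ≤ π * m ^ 2) :
    -(π * m) ≤ entropyProduction α c x f := by
  have hx0 : 0 < x := pos_of_mul_pos_left (hx ▸ one_pos) (by linarith)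
  have h1 := dirichlet_add_firstCoeff_le_entropyProduction (c := c) hf pf hα hx
  have h2 : 0 ≤ ∫ y in (-π)..π, (deriv f y + x * sin y) ^ 2 :=
    intervalIntegral.integral_nonneg (by linarith [pi_pos]) fun y _ => sq_nonneg _
  exact (neg_le_firstCoeff hf pf hm h0 hV).trans (le_of_mul_le_mul_left (by linarith) hx0)

/-- Small entropy production keeps the profile away from zero. -/
theorem lower_bound_of_entropyProduction (hf : ContDiff ℝ (⊤ : ℕ∞) f)
    (pf : Function.Periodic f (2 * π)) (hα : α ^ 2 < 1) (hx : x * (1 - α ^ 2) = 1) (hm : 0 < m)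
    (hc : c = m + x) (h0 : ∫ y in (-π)..π, (f y - (c + x * cos y)) = 0)
    (hV : ∫ y in (-π)..π, (deriv f y + x * sin y) ^ 2 ≤ π * m ^ 2)
    (hP : entropyProduction α c x f ≤ π * m / 10) (y : ℝ) : m / 20 ≤ f y := by
  have cf' := hf.deriv_top.continuous
  have hx0 : 0 < x := pos_of_mul_pos_left (hx ▸ one_pos) (by linarith)
  have h1 := dirichlet_add_firstCoeff_le_entropyProduction (c := c) hf pf hα hx
  have ha : ∫ y in (-π)..π, (f y - (c + x * cos y)) * cos y =
      π * ((∫ y in (-π)..π, (f y - (c + x * cos y)) * cos y) / π) := by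
    rw [mul_div_cancel₀ _ pi_ne_zero]
  have h2 := mul_le_mul_of_nonneg_left hP hx0.le
  have h := perturbed_profile_lower_bound (hasDerivAt_perturbation hf) (by fun_prop)
    (periodic_perturbation pf) h0 ha hx0 hm hV (by
      rw [mul_comm π x, mul_assoc, ← ha]; linarith) y
  linarith

end Estimates

section Evolution

variable {u : ℝ → ℝ → ℝ} {n α c x m M : ℝ}

namespace IsThinFilmSolution

theorem contDiff (hu : IsThinFilmSolution n α u) {t : ℝ} (ht : 0 ≤ t) :
    ContDiff ℝ (⊤ : ℕ∞) (u t) :=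
  contDiff_slice hu.1 ht

theorem contDiffOn_Ioi (hu : IsThinFilmSolution n α u) :
    ContDiffOn ℝ (⊤ : ℕ∞) (fun p : ℝ × ℝ => u p.1 p.2) (Ioi 0 ×ˢ univ) :=
  hu.1.mono (prod_mono Ioi_subset_Ici_self subset_rfl)

theorem deriv_time (hu : IsThinFilmSolution n α u) {t : ℝ} (θ : ℝ) (ht : 0 < t) :
    deriv (fun s => u s θ) t = -deriv (flux n α (u t)) θ :=
  eq_neg_of_add_eq_zero_left (hu.2.2.2 t θ ht)

theorem hasDerivAt_time (hu : IsThinFilmSolution n α u) {t : ℝ} (θ : ℝ) (ht : 0 < t) :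
    HasDerivAt (fun s => u s θ) (-deriv (flux n α (u t)) θ) t := by
  rw [← hu.deriv_time θ ht]
  exact (hasDerivAt_left hu.contDiffOn_Ioi θ ht).differentiableAt.hasDerivAt

theorem deriv_deriv_time (hu : IsThinFilmSolution n α u) {t : ℝ} (θ : ℝ) (ht : 0 < t) :
    deriv (fun x => deriv (fun s => u s x) t) θ = -deriv (deriv (flux n α (u t))) θ := by
  simp_rw [hu.deriv_time _ ht]
  exact deriv.fun_neg

theorem hasDerivAt_time_deriv (hu : IsThinFilmSolution n α u) {t : ℝ} (θ : ℝ) (ht : 0 < t) :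
    HasDerivAt (fun s => deriv (u s) θ) (-deriv (deriv (flux n α (u t))) θ) t := by
  rw [← hu.deriv_deriv_time θ ht]
  exact hasDerivAt_left_deriv_right hu.contDiffOn_Ioi θ ht

theorem continuousOn_deriv_flux (hu : IsThinFilmSolution n α u) :
    ContinuousOn (fun p : ℝ × ℝ => deriv (flux n α (u p.1)) p.2) (Ioi 0 ×ˢ univ) :=
  (contDiffOn_deriv_left hu.contDiffOn_Ioi).continuousOn.neg.congr fun p hp => by
    simp [hu.deriv_time p.2 hp.1]

theorem continuousOn_deriv_deriv_flux (hu : IsThinFilmSolution n α u) :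
    ContinuousOn (fun p : ℝ × ℝ => deriv (deriv (flux n α (u p.1))) p.2) (Ioi 0 ×ˢ univ) :=
  (contDiffOn_deriv_right (u := fun t θ => deriv (fun s => u s θ) t)
    (contDiffOn_deriv_left hu.contDiffOn_Ioi)).continuousOn.neg.congr fun p hp => by
    simp [hu.deriv_deriv_time p.2 hp.1]

/-- Conservation of mass. -/
theorem integral_eq (hu : IsThinFilmSolution n α u) {t : ℝ} (ht : 0 ≤ t) :
    ∫ θ in (-π)..π, u t θ = ∫ θ in (-π)..π, u 0 θ := by
  have hc := continuousOn_integral_param hu.1.continuousOn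
  have hd : ∀ t, 0 < t → HasDerivAt (fun s => ∫ θ in (-π)..π, u s θ) 0 t := fun t ht => by
    have hq := contDiff_flux (n := n) (α := α) (hu.contDiff ht.le) fun y => hu.2.1 t y ht.le
    have h := hasDerivAt_integral_param hu.contDiffOn_Ioi.continuousOn
      hu.continuousOn_deriv_flux.neg (fun t θ ht => hu.hasDerivAt_time θ ht) ht
    rwa [intervalIntegral.integral_neg, integral_deriv_of_periodic hq.hasDerivAt_top
      hq.deriv_top.continuous (periodic_flux (hu.contDiff ht.le) (hu.2.2.1 t)), neg_zero] at h
  refine le_antisymm (antitoneOn_of_hasDerivAt_nonpos hc hd (fun _ _ => le_rfl)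
    self_mem_Ici ht ht) (neg_le_neg_iff.1 ?_)
  exact antitoneOn_of_hasDerivAt_nonpos hc.neg (fun t ht => (hd t ht).neg)
    (fun _ _ => neg_zero.le) self_mem_Ici ht ht

theorem integral_perturbation_eq_zero (hu : IsThinFilmSolution n α u)
    (hM : ∫ θ in (-π)..π, u 0 θ = M) (hc : c = M / (2 * π)) {t : ℝ} (ht : 0 ≤ t) :
    ∫ θ in (-π)..π, (u t θ - (c + x * cos θ)) = 0 := by
  have cf := (hu.contDiff ht).continuous
  rw [intervalIntegral.integral_sub (cf.intervalIntegrable _ _)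
    (Continuous.intervalIntegrable (by fun_prop) _ _), hu.integral_eq ht, hM,
    intervalIntegral.integral_add (by simp) (Continuous.intervalIntegrable (by fun_prop) _ _)]
  simp [hc]
  field_simp
  ring

theorem continuousOn_relativeEnergy (hu : IsThinFilmSolution n α u) :
    ContinuousOn (fun t => relativeEnergy α c x (u t)) (Ici 0) := by
  have c0 := hu.1.continuousOn
  have c1 := continuousOn_deriv_slice hu.1
  exact continuousOn_integral_param
    (f := fun t y => (deriv (u t) y + x * sin y) ^ 2 - α ^ 2 * (u t y - (c + x * cos y)) ^ 2)
    (by fun_prop)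

/-- The energy dissipation identity. -/
theorem hasDerivAt_relativeEnergy (hu : IsThinFilmSolution n α u) (hx : x * (1 - α ^ 2) = 1)
    {t : ℝ} (ht : 0 < t) :
    HasDerivAt (fun t => relativeEnergy α c x (u t)) (-2 * dissipation n α x (u t)) t := by
  have c0 := hu.contDiffOn_Ioi.continuousOn
  have c1 := (contDiffOn_deriv_right hu.contDiffOn_Ioi).continuousOn
  have c2 := hu.continuousOn_deriv_flux
  have c3 := hu.continuousOn_deriv_deriv_flux
  have h := hasDerivAt_integral_param
    (f := fun t y => (deriv (u t) y + x * sin y) ^ 2 - α ^ 2 * (u t y - (c + x * cos y)) ^ 2)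
    (f' := fun t y => -2 * ((deriv (u t) y + x * sin y) * deriv (deriv (flux n α (u t))) y
        - α ^ 2 * (u t y - (c + x * cos y)) * deriv (flux n α (u t)) y))
    (by fun_prop) (by fun_prop) (fun t θ ht => by
      convert! (((hu.hasDerivAt_time_deriv θ ht).add_const (x * sin θ)).fun_pow 2).fun_sub
        ((((hu.hasDerivAt_time θ ht).sub_const (c + x * cos θ)).fun_pow 2).const_mul (α ^ 2))
        using 1
      push_cast
      ring) ht
  rwa [intervalIntegral.integral_const_mul, integral_energy_variation_flux (hu.contDiff ht.le)
    (fun y => hu.2.1 t y ht.le) (hu.2.2.1 t) hx] at h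

/-- The entropy dissipation identity. -/
theorem hasDerivAt_entropy (hu : IsThinFilmSolution n α u) (hx : x * (1 - α ^ 2) = 1)
    {t : ℝ} (ht : 0 < t) :
    HasDerivAt (fun t => ∫ y in (-π)..π, entropyDensity n (u t y))
      (-entropyProduction α c x (u t)) t := by
  have c0 := hu.contDiffOn_Ioi.continuousOn
  have hpos : MapsTo (fun p : ℝ × ℝ => u p.1 p.2) (Ioi 0 ×ˢ univ) (Ioi 0) :=
    fun p hp => hu.2.1 p.1 p.2 (le_of_lt hp.1)
  have cG : ContinuousOn (entropyDensity n) (Ioi 0) := fun y hy =>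
    (hasDerivAt_entropyDensity n hy).continuousAt.continuousWithinAt
  have h := hasDerivAt_integral_param (f := fun t y => entropyDensity n (u t y))
    (f' := fun t y => -(entropyDensityDeriv n (u t y) * deriv (flux n α (u t)) y))
    (cG.comp c0 hpos)
    (((continuousOn_entropyDensityDeriv n).comp c0 hpos).mul hu.continuousOn_deriv_flux).neg
    (fun t θ ht => by
      rw [← mul_neg]
      exact (hasDerivAt_entropyDensity n (hu.2.1 t θ ht.le)).comp t (hu.hasDerivAt_time θ ht)) ht
  rwa [intervalIntegral.integral_neg, integral_entropy_variation_flux (hu.contDiff ht.le)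
    (fun y => hu.2.1 t y ht.le) (hu.2.2.1 t) hx] at h

/-- The relative energy becomes arbitrarily small. -/
theorem exists_relativeEnergy_le (hu : IsThinFilmSolution n α u) (hn : 0 < n) (hα : α ^ 2 < 1)
    (hx : x * (1 - α ^ 2) = 1) (hm : 0 < m) (hc : c = m + x)
    (h0 : ∀ t, 0 ≤ t → ∫ θ in (-π)..π, (u t θ - (c + x * cos θ)) = 0)
    (hV : ∀ t, 0 ≤ t → ∫ y in (-π)..π, (deriv (u t) y + x * sin y) ^ 2 ≤ π * m ^ 2)
    {δ : ℝ} (hδ : 0 < δ) : ∃ T, 0 < T ∧ relativeEnergy α c x (u T) ≤ δ := by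
  have hpm : 0 < π * m := mul_pos pi_pos hm
  set k := (1 - α ^ 2) * (m / 20) ^ n with hk
  have hk0 : 0 < k := mul_pos (by linarith) (rpow_pos_of_pos (by linarith) n)
  set l := (π * m / 10 + π * m) / (2 * (k * δ)) with hl
  have hl0 : 0 < l := by positivity
  obtain ⟨T, hT, h⟩ := exists_deriv_gt_of_nonneg
    (Y := fun t => (∫ y in (-π)..π, entropyDensity n (u t y)) + l * relativeEnergy α c x (u t))
    (fun t ht => add_nonneg (intervalIntegral.integral_nonneg (by linarith [pi_pos])
        fun y _ => entropyDensity_nonneg n (hu.2.1 t y ht.le))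
      (mul_nonneg hl0.le (relativeEnergy_nonneg (hu.contDiff ht.le) (hu.2.2.1 t) hα (h0 t ht.le))))
    (fun t ht => (hu.hasDerivAt_entropy (c := c) hx ht).add
      ((hu.hasDerivAt_relativeEnergy hx ht).const_mul l)) (by positivity : 0 < π * m / 10)
  have hf := hu.contDiff hT.le
  have hpos := fun y => hu.2.1 T y hT.le
  have hD := mul_nonneg hl0.le (dissipation_nonneg (n := n) (α := α) (x := x) hpos)
  have hP := neg_le_entropyProduction hf (hu.2.2.1 T) hα hx hm (h0 T hT.le) (hV T hT.le)
  have hlow := lower_bound_of_entropyProduction hf (hu.2.2.1 T) hα hx hm hc (h0 T hT.le)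
    (hV T hT.le) (by linarith)
  have hQ := relativeEnergy_le_dissipation hf (hu.2.2.1 T) hα hn hpos (h0 T hT.le)
    (by linarith : 0 ≤ m / 20) hlow
  refine ⟨T, hT, ?_⟩
  have h1 := mul_le_mul_of_nonneg_left hQ hl0.le
  have h2 : 2 * l * (k * δ) = π * m / 10 + π * m := by
    rw [hl]; field_simp
  have h3 : (2 * l * k) * relativeEnergy α c x (u T) ≤ (2 * l * k) * δ := by
    rw [← hk] at h1
    linarith
  exact le_of_mul_le_mul_left h3 (by positivity)

/-- Exponential decay of the relative energy. -/
theorem exists_relativeEnergy_le_exp (hu : IsThinFilmSolution n α u) (hn : 0 < n)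
    (hα : α ^ 2 < 1) (hx : x * (1 - α ^ 2) = 1) (hm : 0 < m) (hc : c = m + x)
    (h0 : ∀ t, 0 ≤ t → ∫ θ in (-π)..π, (u t θ - (c + x * cos θ)) = 0)
    (hE : relativeEnergy α c x (u 0) ≤ (1 - α ^ 2) * π * m ^ 2) :
    ∃ K, 0 ≤ K ∧ ∀ t, 0 ≤ t →
      relativeEnergy α c x (u t) ≤ K * exp (-2 * ((1 - α ^ 2) * m ^ n) * t) := by
  have hx0 : 0 < x := pos_of_mul_pos_left (hx ▸ one_pos) (by linarith)
  have hD : ∀ t, 0 < t → 0 ≤ dissipation n α x (u t) := fun t ht =>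
    dissipation_nonneg fun y => hu.2.1 t y ht.le
  have hcont := hu.continuousOn_relativeEnergy (c := c) (x := x)
  have hd := fun t ht => hu.hasDerivAt_relativeEnergy (c := c) hx (t := t) ht
  have hmono := antitoneOn_of_hasDerivAt_nonpos hcont hd fun t ht => by linarith [hD t ht]
  have hV : ∀ t, 0 ≤ t → ∫ y in (-π)..π, (deriv (u t) y + x * sin y) ^ 2 ≤ π * m ^ 2 :=
    fun t ht => by
      have h1 := dirichlet_le_relativeEnergy (hu.contDiff ht) (hu.2.2.1 t) hα hx (h0 t ht)
      have h2 := mul_le_mul_of_nonneg_left ((hmono self_mem_Ici ht ht).trans hE) hx0.le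
      refine (h1.trans h2).trans_eq ?_
      linear_combination π * m ^ 2 * hx
  obtain ⟨T, hT, hQT⟩ := hu.exists_relativeEnergy_le hn hα hx hm hc h0 hV
    (by positivity : 0 < (m / 2) ^ 2 / x)
  refine exists_exp_decay hn hm hx0 (by linarith) hcont (fun t ht =>
    relativeEnergy_nonneg (hu.contDiff ht) (hu.2.2.1 t) hα (h0 t ht)) hd hD
    (fun t ht hle => ?_) hT ((le_div_iff₀' hx0).1 hQT)
  refine relativeEnergy_le_dissipation (hu.contDiff ht.le) (hu.2.2.1 t) hα hn
    (fun y => hu.2.1 t y ht.le) (h0 t ht.le) (sub_nonneg.2 hle) fun y => ?_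
  have := sub_sqrt_le_of_relativeEnergy (hu.contDiff ht.le) (hu.2.2.1 t) hα hx (h0 t ht.le) y
  linarith

end IsThinFilmSolution

end Evolution

/-- Local exponential attractivity of the strictly positive minimizer:
for `0 ≤ α < 1`, `M(1−α²) > 2π`, `u*(θ) = M/(2π) + cos θ/(1−α²)`, `m = min u*`,
`μ = (1−α²)mⁿ`, `ε₀ = ((1−α²)π/2)m²`, every strictly positive classical solution of mass
`M` whose initial energy satisfies `E(u(0,·)) < E(u*) + ε₀` converges to `u*` in `H¹` at
exponential rate: `‖u(t,·) − u*‖_{H¹} ≤ K₁ e^{−μt}`. -/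
theorem exponential_convergence (n α M : ℝ) (hn : 0 < n) (hα0 : 0 ≤ α) (hα1 : α < 1)
    (hmass : M * (1 - α^2) > 2*π)
    (ustar : ℝ → ℝ) (hstar : ∀ θ : ℝ, ustar θ = M / (2*π) + Real.cos θ / (1 - α^2))
    (m μ ε₀ : ℝ) (hm : m = M / (2*π) - 1 / (1 - α^2))
    (hμ : μ = (1 - α^2) * m ^ n) (hε₀ : ε₀ = ((1 - α^2) * π / 2) * m^2)
    (u : ℝ → ℝ → ℝ) (hu : IsThinFilmSolution n α u)
    (humass : (∫ θ in (-π)..π, u 0 θ) = M)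
    (hE0 : energy α (u 0) < energy α ustar + ε₀) :
    ∃ K₁ : ℝ, ∀ t : ℝ, 0 ≤ t →
      Real.sqrt (∫ θ in (-π)..π,
          ((u t θ - ustar θ)^2 + (deriv (u t) θ - deriv ustar θ)^2)) ≤
        K₁ * Real.exp (-μ * t) := by
  have hα : α ^ 2 < 1 := by nlinarith
  have hβ : 0 < 1 - α ^ 2 := by linarith
  set c := M / (2 * π) with hc
  set x := 1 / (1 - α ^ 2) with hxdef
  have hx : x * (1 - α ^ 2) = 1 := by rw [hxdef]; field_simp
  have hx0 : 0 < x := by positivity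
  have hm0 : 0 < m := by
    rw [hm, sub_pos, hxdef, hc, div_lt_div_iff₀ hβ (by positivity)]
    linarith
  have hs : ustar = fun θ => c + x * cos θ := funext fun θ => by
    rw [hstar, hxdef]; ring
  have hds : ∀ θ, deriv ustar θ = -(x * sin θ) := fun θ => by
    rw [hs, (((hasDerivAt_cos θ).const_mul x).const_add c).deriv]; ring
  have h0 : ∀ t, 0 ≤ t → ∫ θ in (-π)..π, (u t θ - (c + x * cos θ)) = 0 := fun t ht =>
    hu.integral_perturbation_eq_zero humass hc ht
  have hE := energy_eq_add_quadraticForm (hu.contDiff le_rfl) (hu.2.2.1 0) hx (h0 0 le_rfl)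
  rw [← relativeEnergy, ← hs] at hE
  obtain ⟨K, hK, hdecay⟩ := hu.exists_relativeEnergy_le_exp hn hα hx hm0 (by linarith : c = m + x)
    h0 (by rw [hε₀] at hE0; linarith)
  refine ⟨sqrt (2 * x * K), fun t ht => ?_⟩
  have hf := hu.contDiff ht
  have cf := hf.continuous
  have cf' := hf.deriv_top.continuous
  have hV := dirichlet_le_relativeEnergy hf (hu.2.2.1 t) hα hx (h0 t ht)
  have hW := integral_sq_le_integral_deriv_sq (hasDerivAt_perturbation hf) (by fun_prop)
    (periodic_perturbation (hu.2.2.1 t)) (h0 t ht)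
  have hI : ∫ θ in (-π)..π, ((u t θ - ustar θ) ^ 2 + (deriv (u t) θ - deriv ustar θ) ^ 2) ≤
      2 * x * K * exp (-μ * t) ^ 2 := by
    simp only [hds, sub_neg_eq_add]
    rw [hs, intervalIntegral.integral_add (Continuous.intervalIntegrable (by fun_prop) _ _)
      (Continuous.intervalIntegrable (by fun_prop) _ _), ← exp_nat_mul]
    have h1 := mul_le_mul_of_nonneg_left (hdecay t ht) hx0.le
    have h2 : ((2 : ℕ) : ℝ) * (-μ * t) = -2 * ((1 - α ^ 2) * m ^ n) * t := by
      rw [hμ]; push_cast; ring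
    rw [h2]
    linarith
  refine (sqrt_le_sqrt hI).trans_eq ?_
  rw [sqrt_mul (by positivity), sqrt_sq (exp_pos _).le]
end

section
/- Let β > 0, let S₀, K₀ > 0, and let u* : ℝ → [0,∞) be a 2π-periodic function that vanishes identically on an interval I ⊆ (−π, π) of length L > 0. Let u : [0,∞) × ℝ → [0,∞) be measurable and 2π-periodic in the second variable, and suppose the entropy bound ∫_{-π}^{π} u(t,θ)^{-β} dθ ≤ S₀ + K₀ t holds for all t ≥ 0. Then for all t ≥ 0, ( ∫_{-π}^{π} (u(t,θ) − u*(θ))² dθ )^{1/2} ≥ ( L^{1 + β/2} / (S₀ + K₀ t) )^{1/β}. In particular, u(t,·) cannot converge to u* in L²(−π,π) faster than the power law t^{−1/β}. -/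
open MeasureTheory Real Set Filter

/-- Hölder interpolation between a negative moment and the second moment: the total mass is
controlled by `∫ f ^ (-β)` and the `L²` norm of `f`. -/
theorem measure_univ_rpow_le_lintegral_inv_rpow_mul {α : Type*} [MeasurableSpace α]
    {μ : Measure α} {β : ℝ} (hβ : 0 < β) {f : α → ENNReal} (hf : AEMeasurable f μ)
    (hf_top : ∀ x, f x ≠ ⊤) (hfin : ∫⁻ x, (f x)⁻¹ ^ β ∂μ ≠ ⊤) :
    μ univ ^ (1 + β / 2) ≤
      (∫⁻ x, (f x)⁻¹ ^ β ∂μ) * ((∫⁻ x, f x ^ (2 : ℝ) ∂μ) ^ (1 / (2 : ℝ))) ^ β := by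
  have hp : 0 < 1 + β / 2 := by positivity
  have hpq : (1 + β / 2).HolderConjugate ((2 + β) / β) := by
    rw [Real.holderConjugate_iff]
    refine ⟨by linarith, ?_⟩
    field_simp
  have hpos : ∀ᵐ x ∂μ, (f x)⁻¹ ^ β < ⊤ := ae_lt_top' (hf.inv.pow_const β) hfin
  have holder := ENNReal.lintegral_mul_le_Lp_mul_Lq μ hpq
    (hf.inv.pow_const (β / (1 + β / 2))) (hf.pow_const (β / (1 + β / 2)))
  have hone : ∫⁻ x, ((fun x => f⁻¹ x ^ (β / (1 + β / 2))) *
      fun x => f x ^ (β / (1 + β / 2))) x ∂μ = μ univ := by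
    rw [← lintegral_one]
    refine lintegral_congr_ae ?_
    filter_upwards [hpos] with x hx
    have hx0 : f x ≠ 0 := by
      intro h
      simp [h, ENNReal.top_rpow_of_pos hβ] at hx
    rw [Pi.mul_apply, Pi.inv_apply, ← ENNReal.mul_rpow_of_nonneg _ _ (by positivity),
      ENNReal.inv_mul_cancel hx0 (hf_top x), ENNReal.one_rpow]
  have hexp₁ : β / (1 + β / 2) * (1 + β / 2) = β := by field_simp
  have hexp₂ : β / (1 + β / 2) * ((2 + β) / β) = 2 := by field_simp
  rw [hone] at holder
  simp only [Pi.inv_apply, ← ENNReal.rpow_mul, hexp₁, hexp₂] at holder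
  have hpow := ENNReal.rpow_le_rpow holder hp.le
  have hexp₃ : 1 / ((2 + β) / β) * (1 + β / 2) = 1 / 2 * β := by field_simp
  rwa [ENNReal.mul_rpow_of_nonneg _ _ hp.le, ← ENNReal.rpow_mul, ← ENNReal.rpow_mul, hexp₃,
    one_div_mul_cancel hp.ne', ENNReal.rpow_one, ENNReal.rpow_mul] at hpow

/-- Power-law lower bound on the distance from a steady state with a dry
region: if `u*` vanishes on an interval of length `L > 0` inside `(−π,π)` and the entropy
of `u(t,·)` (with the convention that `v^{−β} = +∞` where `v = 0`) grows at most linearly,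
then `‖u(t,·) − u*‖_{L²(−π,π)} ≥ (L^{1+β/2}/(S₀ + K₀t))^{1/β}`. -/
theorem dry_region_power_law (β S₀ K₀ L a b : ℝ)
    (hβ : 0 < β) (hS₀ : 0 < S₀) (hK₀ : 0 < K₀) (hL : 0 < L)
    (hab : Ioo a b ⊆ Ioo (-π) π) (hlen : b - a = L)
    (ustar : ℝ → ℝ) (hper : Function.Periodic ustar (2*π))
    (hnonnegstar : ∀ θ : ℝ, 0 ≤ ustar θ)
    (hvanish : ∀ θ ∈ Ioo a b, ustar θ = 0)
    (u : ℝ → ℝ → ℝ) (hmeas : Measurable (fun p : ℝ × ℝ => u p.1 p.2))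
    (hnonneg : ∀ t θ : ℝ, 0 ≤ u t θ)
    (huper : ∀ t : ℝ, Function.Periodic (u t) (2*π))
    (hentropy : ∀ t : ℝ, 0 ≤ t →
      (∫⁻ θ in Ioo (-π) π, (ENNReal.ofReal (u t θ))⁻¹ ^ β) ≤
        ENNReal.ofReal (S₀ + K₀ * t)) :
    ∀ t : ℝ, 0 ≤ t →
      ENNReal.ofReal ((L ^ (1 + β/2) / (S₀ + K₀ * t)) ^ (1/β)) ≤
        eLpNorm (fun θ => u t θ - ustar θ) 2 (volume.restrict (Ioo (-π) π)) := by
  intro t ht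
  have hE : 0 < S₀ + K₀ * t := by positivity
  have hmeas_t : Measurable (u t) := hmeas.comp measurable_prodMk_left
  have hle : ∫⁻ θ in Ioo a b, (ENNReal.ofReal (u t θ))⁻¹ ^ β ≤ ENNReal.ofReal (S₀ + K₀ * t) :=
    (lintegral_mono_set hab).trans (hentropy t ht)
  have hnorm : (∫⁻ θ in Ioo a b, ENNReal.ofReal (u t θ) ^ (2 : ℝ)) ^ (1 / (2 : ℝ)) ≤
      eLpNorm (fun θ => u t θ - ustar θ) 2 (volume.restrict (Ioo (-π) π)) := by
    refine le_trans (le_of_eq ?_) (eLpNorm_mono_measure _ (Measure.restrict_mono_set volume hab))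
    rw [eLpNorm_eq_lintegral_rpow_enorm_toReal (by norm_num) (by norm_num), ENNReal.toReal_ofNat]
    congr 1
    refine setLIntegral_congr_fun measurableSet_Ioo fun θ hθ => ?_
    simp only [hvanish θ hθ, sub_zero, Real.enorm_of_nonneg (hnonneg t θ)]
  have hmain := measure_univ_rpow_le_lintegral_inv_rpow_mul (μ := volume.restrict (Ioo a b)) hβ
    hmeas_t.ennreal_ofReal.aemeasurable (fun _ => ENNReal.ofReal_ne_top)
    (ne_top_of_le_ne_top ENNReal.ofReal_ne_top hle)
  rw [Measure.restrict_apply_univ, Real.volume_Ioo, hlen,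
    ENNReal.ofReal_rpow_of_pos hL] at hmain
  rw [← ENNReal.ofReal_rpow_of_pos (by positivity), one_div, ENNReal.rpow_inv_le_iff hβ,
    ENNReal.ofReal_div_of_pos hE]
  refine ENNReal.div_le_of_le_mul' (hmain.trans ?_)
  gcongr
end

section
/- Let β > 1, let S₀, K₀ > 0, let θ₀ ∈ (−π, π), and let u* : ℝ → [0,∞) be a continuous 2π-periodic function with u*(θ₀) = 0 that vanishes quadratically at θ₀: there is a constant C > 0 with u*(θ) ≤ C(θ − θ₀)² for all θ ∈ (−π,π). Let u : [0,∞) × ℝ → [0,∞) be measurable and 2π-periodic in the second variable, and suppose the entropy bound ∫_{-π}^{π} u(t,θ)^{-β} dθ ≤ S₀ + K₀ t holds for all t ≥ 0. Then there exist positive constants K₂ and K₃ such that ( ∫_{-π}^{π} (u(t,θ) − u*(θ))² dθ )^{1/2} ≥ (K₂ + K₃ t)^{−3/(2(β−1))} for all t ≥ 0. -/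
open MeasureTheory Real Set Filter

/-- If `v ^ (-β)` has integral at most `E`, then the sublevel set `{v < m}` has measure at most
`E * m ^ β`. -/
lemma meas_lt_le_of_lintegral_inv_rpow_le {α : Type*} [MeasurableSpace α] {μ : Measure α}
    {v : α → ℝ} (hv : Measurable v) {β E m : ℝ} (hβ : 0 ≤ β) (hm : 0 < m)
    (h : ∫⁻ x, (ENNReal.ofReal (v x))⁻¹ ^ β ∂μ ≤ ENNReal.ofReal E) :
    μ {x | v x < m} ≤ ENNReal.ofReal (E * m ^ β) := by
  have hmβ : 0 < m ^ β := Real.rpow_pos_of_pos hm β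
  have hmeas : Measurable fun x => (ENNReal.ofReal (v x))⁻¹ ^ β := by fun_prop
  have hmarkov := (mul_meas_ge_le_lintegral (μ := μ) hmeas ((ENNReal.ofReal m)⁻¹ ^ β)).trans h
  have hsub : {x | v x < m} ⊆
      {x | (ENNReal.ofReal m)⁻¹ ^ β ≤ (ENNReal.ofReal (v x))⁻¹ ^ β} := by
    intro x hx
    exact ENNReal.rpow_le_rpow
      (ENNReal.inv_le_inv.2 (ENNReal.ofReal_le_ofReal (le_of_lt hx))) hβ
  rw [ENNReal.inv_rpow, ENNReal.ofReal_rpow_of_pos hm] at hmarkov hsub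
  rw [mul_comm E, ENNReal.ofReal_mul hmβ.le]
  refine (measure_mono hsub).trans ?_
  rwa [← ENNReal.inv_mul_le_iff (ENNReal.ofReal_pos.2 hmβ).ne' ENNReal.ofReal_ne_top]

/-- Lower bound for the `L²` distance on `s` between `v` and a function `w` with a quadratic zero
at `x₀`, at a scale `δ` for which the sublevel set `{v < 2Cδ²}` has measure at most `δ`. -/
lemma le_eLpNorm_sub_of_quadratic_zero {s : Set ℝ} {v w : ℝ → ℝ} (hv : Measurable v)
    (hw : Measurable w) {C x₀ δ : ℝ} (hC : 0 ≤ C) (hδ : 0 ≤ δ)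
    (hs : Ioo (x₀ - δ) (x₀ + δ) ⊆ s) (hquad : ∀ x ∈ s, w x ≤ C * (x - x₀) ^ 2)
    (hsmall : volume.restrict s {x | v x < 2 * C * δ ^ 2} ≤ ENNReal.ofReal δ) :
    ENNReal.ofReal (C * δ ^ (5 / 2 : ℝ)) ≤
      eLpNorm (fun x => v x - w x) 2 (volume.restrict s) := by
  set μ := volume.restrict s
  set I := Ioo (x₀ - δ) (x₀ + δ)
  set B := {x | ENNReal.ofReal (C * δ ^ 2) ^ (2 : ℝ) ≤ ‖v x - w x‖ₑ ^ (2 : ℝ)}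
  have hI : μ I = ENNReal.ofReal δ + ENNReal.ofReal δ := by
    rw [Measure.restrict_apply measurableSet_Ioo, inter_eq_left.2 hs, Real.volume_Ioo,
      ← ENNReal.ofReal_add hδ hδ]
    ring_nf
  have hcover : I ⊆ {x | v x < 2 * C * δ ^ 2} ∪ B := by
    intro x hx
    rcases lt_or_ge (v x) (2 * C * δ ^ 2) with hlt | hge
    · exact Or.inl hlt
    · refine Or.inr (ENNReal.rpow_le_rpow ?_ zero_le_two)
      rw [← ofReal_norm]
      refine ENNReal.ofReal_le_ofReal ((?_ : _ ≤ v x - w x).trans (Real.le_norm_self _))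
      have hsq : (x - x₀) ^ 2 ≤ δ ^ 2 :=
        sq_le_sq' (by linarith [hx.1]) (by linarith [hx.2])
      nlinarith [hquad x (hs hx), mul_le_mul_of_nonneg_left hsq hC]
  have hB : ENNReal.ofReal δ ≤ μ B := by
    have hle : ENNReal.ofReal δ + ENNReal.ofReal δ ≤ ENNReal.ofReal δ + μ B :=
      hI ▸ (measure_mono hcover).trans ((measure_union_le _ _).trans (by gcongr))
    exact (ENNReal.add_le_add_iff_left ENNReal.ofReal_ne_top).1 hle
  have hcheb := pow_mul_meas_ge_le_eLpNorm μ (p := 2) two_ne_zero ENNReal.ofNat_ne_top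
    (hv.sub hw).aestronglyMeasurable (ENNReal.ofReal (C * δ ^ 2) ^ (2 : ℝ))
  simp only [ENNReal.toReal_ofNat, Pi.sub_apply] at hcheb
  refine le_trans ?_ hcheb
  calc ENNReal.ofReal (C * δ ^ (5 / 2 : ℝ))
      = (ENNReal.ofReal (C * δ ^ 2) ^ (2 : ℝ) * ENNReal.ofReal δ) ^ (1 / 2 : ℝ) := by
        rw [ENNReal.mul_rpow_of_nonneg _ _ (by norm_num), ← ENNReal.rpow_mul,
          ENNReal.ofReal_rpow_of_nonneg hδ (by norm_num)]
        norm_num only [ENNReal.rpow_one]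
        rw [← ENNReal.ofReal_mul (by positivity), mul_assoc, ← Real.rpow_two,
          ← Real.rpow_add_of_nonneg hδ (by norm_num) (by norm_num)]
        norm_num
    _ ≤ _ := ENNReal.rpow_le_rpow (by gcongr) (by norm_num)

/-- Power-law lower bound on the distance from a steady state with a
quadratic touchdown zero: if `u*` is continuous, `2π`-periodic, vanishes at `θ₀` with
`u*(θ) ≤ C(θ − θ₀)²` on `(−π,π)`, and the entropy of `u(t,·)` (with the convention that
`v^{−β} = +∞` where `v = 0`) grows at most linearly, then there are `K₂, K₃ > 0` with
`‖u(t,·) − u*‖_{L²(−π,π)} ≥ (K₂ + K₃t)^{−3/(2(β−1))}`. -/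
theorem touchdown_power_law (β S₀ K₀ θ₀ C : ℝ)
    (hβ : 1 < β) (hS₀ : 0 < S₀) (hK₀ : 0 < K₀) (hC : 0 < C)
    (hθ₀ : θ₀ ∈ Ioo (-π) π)
    (ustar : ℝ → ℝ) (hcont : Continuous ustar) (hper : Function.Periodic ustar (2*π))
    (hnonnegstar : ∀ θ : ℝ, 0 ≤ ustar θ) (hzero : ustar θ₀ = 0)
    (hquad : ∀ θ ∈ Ioo (-π) π, ustar θ ≤ C * (θ - θ₀)^2)
    (u : ℝ → ℝ → ℝ) (hmeas : Measurable (fun p : ℝ × ℝ => u p.1 p.2))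
    (hnonneg : ∀ t θ : ℝ, 0 ≤ u t θ)
    (huper : ∀ t : ℝ, Function.Periodic (u t) (2*π))
    (hentropy : ∀ t : ℝ, 0 ≤ t →
      (∫⁻ θ in Ioo (-π) π, (ENNReal.ofReal (u t θ))⁻¹ ^ β) ≤
        ENNReal.ofReal (S₀ + K₀ * t)) :
    ∃ K₂ K₃ : ℝ, 0 < K₂ ∧ 0 < K₃ ∧ ∀ t : ℝ, 0 ≤ t →
      ENNReal.ofReal ((K₂ + K₃ * t) ^ (-(3 / (2 * (β - 1))))) ≤
        eLpNorm (fun θ => u t θ - ustar θ) 2 (volume.restrict (Ioo (-π) π)) := by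
  set a : ℝ := 1 / (2 * β - 1) with ha
  set γ : ℝ := 3 / (2 * (β - 1)) with hγ
  have hden : 0 < 2 * β - 1 := by linarith
  have ha0 : 0 < a := by positivity
  have hgap : 0 < γ - a * (5 / 2) := by
    rw [ha, hγ, sub_pos, one_div_mul_eq_div, div_lt_div_iff₀ hden (by linarith)]
    linarith
  obtain ⟨r, hr, hrI⟩ : ∃ r > 0, Ioo (θ₀ - r) (θ₀ + r) ⊆ Ioo (-π) π := by
    obtain ⟨r, hr, hball⟩ := Metric.isOpen_iff.1 isOpen_Ioo θ₀ hθ₀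
    exact ⟨r, hr, Real.ball_eq_Ioo θ₀ r ▸ hball⟩
  have hscale : ∀ᶠ M : ℝ in atTop, M ^ (-a) ≤ r :=
    (tendsto_rpow_neg_atTop ha0).eventually_le_const hr
  have hconst : ∀ᶠ M : ℝ in atTop, C⁻¹ ≤ M ^ (γ - a * (5 / 2)) :=
    (tendsto_rpow_atTop hgap).eventually_ge_atTop _
  obtain ⟨N, hN⟩ := eventually_atTop.1 (hscale.and hconst)
  refine ⟨max N (S₀ * (2 * C) ^ β), K₀ * (2 * C) ^ β, lt_max_of_lt_right (by positivity),
    by positivity, fun t ht => ?_⟩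
  set M : ℝ := max N (S₀ * (2 * C) ^ β) + K₀ * (2 * C) ^ β * t
  have hKt : 0 ≤ K₀ * (2 * C) ^ β * t := by positivity
  have hNM : N ≤ M := by linarith [le_max_left N (S₀ * (2 * C) ^ β)]
  have hEM : (S₀ + K₀ * t) * (2 * C) ^ β ≤ M := by
    linarith [le_max_right N (S₀ * (2 * C) ^ β)]
  have hM0 : 0 < M := lt_of_lt_of_le (by positivity) hEM
  obtain ⟨hδr, hCM⟩ := hN M hNM
  set δ : ℝ := M ^ (-a) with hδ
  have hδ0 : 0 < δ := Real.rpow_pos_of_pos hM0 _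
  have hv : Measurable (u t) := hmeas.comp measurable_prodMk_left
  have hsmall : volume.restrict (Ioo (-π) π) {θ | u t θ < 2 * C * δ ^ 2} ≤ ENNReal.ofReal δ := by
    refine (meas_lt_le_of_lintegral_inv_rpow_le hv (by linarith) (by positivity)
      (hentropy t ht)).trans (ENNReal.ofReal_le_ofReal ?_)
    have hMδ : M * (δ ^ 2) ^ β = δ := by
      rw [← Real.rpow_natCast δ 2, hδ, ← Real.rpow_mul hM0.le, ← Real.rpow_mul hM0.le]
      nth_rewrite 1 [← Real.rpow_one M]
      rw [← Real.rpow_add hM0]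
      congr 1
      rw [ha]
      field_simp
      push_cast
      ring
    calc (S₀ + K₀ * t) * (2 * C * δ ^ 2) ^ β
        = (S₀ + K₀ * t) * (2 * C) ^ β * (δ ^ 2) ^ β := by
          rw [Real.mul_rpow (by positivity) (by positivity), mul_assoc]
      _ ≤ M * (δ ^ 2) ^ β := by gcongr
      _ = δ := hMδ
  refine le_trans (ENNReal.ofReal_le_ofReal ?_)
    (le_eLpNorm_sub_of_quadratic_zero hv hcont.measurable hC.le hδ0.le
      ((Ioo_subset_Ioo (by linarith) (by linarith)).trans hrI) hquad hsmall)
  have hsplit : δ ^ (5 / 2 : ℝ) = M ^ (γ - a * (5 / 2)) * M ^ (-γ) := by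
    rw [hδ, ← Real.rpow_mul hM0.le, ← Real.rpow_add hM0]
    ring_nf
  rw [hsplit, ← mul_assoc]
  refine le_mul_of_one_le_left (by positivity) ?_
  rwa [inv_le_iff_one_le_mul₀' hC] at hCM
end
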